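/- arXiv:1411.4196 — 3 statements merged into one kernel-verified Lean document; each statement's English description precedes it below -/
import Mathlib

section
/- Let k ≥ 2 be an integer. For all sufficiently large n with k dividing n, if ℱ is a family of subsets of [n] of size m = |ℱ| = k·2^{n/k} − k + 1 satisfying c(ℱ) = c(n,m) (i.e. ℱ maximises the number of comparable pairs among families of m subsets of [n]), then ℱ is a tower of k cubes of dimension n/k. -/
open Finset

/-- `crossComp 𝒜 ℬ` is the number of pairs `(A, B) ∈ 𝒜 × ℬ` with `A ⊊ B`. -/
def crossComp {n : ℕ} (𝒜 ℬ : Finset (Finset (Fin n))) : ℕ :=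
  ((𝒜 ×ˢ ℬ).filter (fun p => p.1 ⊂ p.2)).card

/-- `compCount ℱ` is the number of comparable pairs in `ℱ`, i.e. the number of unordered
pairs `{A, B}` of distinct sets in `ℱ` with `A ⊆ B` or `B ⊆ A`. -/
def compCount {n : ℕ} (ℱ : Finset (Finset (Fin n))) : ℕ := crossComp ℱ ℱ

/-- `maxComp n m` is `c(n,m)`, the maximum number of comparable pairs over all families of
`m` subsets of `[n]`. -/
def maxComp (n m : ℕ) : ℕ :=
  ((Finset.univ : Finset (Finset (Fin n))).powersetCard m).sup compCount

/-- `IsTower n k 𝒯` says that `𝒯` is a tower of `k` cubes of dimension `n/k` over `[n]`. -/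
def IsTower (n k : ℕ) (𝒯 : Finset (Finset (Fin n))) : Prop :=
  ∃ X : ℕ → Finset (Fin n),
    X 0 = ∅ ∧ X k = Finset.univ ∧
    (∀ i ≤ k, (X i).card = i * (n / k)) ∧
    (∀ i < k, X i ⊆ X (i + 1)) ∧
    𝒯 = Finset.univ.filter (fun F => ∃ i ∈ Finset.Icc 1 k, X (i - 1) ⊆ F ∧ F ⊆ X i)


noncomputable def Phi {n : ℕ} (ℱ : Finset (Finset (Fin n))) : ℕ → Finset (Fin n) → ℝ
  | 0, _ => 1
  | j+1, X => (∑ B ∈ ℱ.filter (fun B => X ⊆ B), Phi ℱ j B) / (ℱ.card : ℝ)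

lemma Phi_nonneg {n : ℕ} (ℱ : Finset (Finset (Fin n))) (j : ℕ) : ∀ X, 0 ≤ Phi ℱ j X := by
  induction j with
  | zero => intro X; simp [Phi]
  | succ j ih =>
    intro X
    simp only [Phi]
    exact div_nonneg (Finset.sum_nonneg fun B _ => ih B) (Nat.cast_nonneg _)

lemma Phi_le_one {n : ℕ} (ℱ : Finset (Finset (Fin n))) (j : ℕ) : ∀ X, Phi ℱ j X ≤ 1 := by
  induction j with
  | zero => intro X; simp [Phi]
  | succ j ih =>
    intro X
    simp only [Phi]
    apply div_le_one_of_le₀ _ (Nat.cast_nonneg _)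
    calc (∑ B ∈ ℱ.filter (fun B => X ⊆ B), Phi ℱ j B)
        ≤ ∑ B ∈ ℱ.filter (fun B => X ⊆ B), 1 := Finset.sum_le_sum fun B _ => ih B
      _ = ((ℱ.filter (fun B => X ⊆ B)).card : ℝ) := by simp
      _ ≤ ℱ.card := by exact_mod_cast Finset.card_filter_le _ _

lemma small_tuples {n : ℕ} (X : Finset (Fin n)) (t s : ℕ)
    (𝒢 : Finset (Finset (Fin n))) (h𝒢 : ∀ A ∈ 𝒢, X ⊆ A) :
    (((Fintype.piFinset (fun _ : Fin t => 𝒢)).filter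
      (fun a => (X ∪ Finset.univ.sup a).card < X.card + s)).card : ℝ) ≤ 2^n * (2^s)^t := by
  have h1 : ((Fintype.piFinset (fun _ : Fin t => 𝒢)).filter
      (fun a => (X ∪ Finset.univ.sup a).card < X.card + s)) ⊆
      ((Finset.univ : Finset (Finset (Fin n))).filter
        (fun U => X ⊆ U ∧ U.card < X.card + s)).biUnion
        (fun U => Fintype.piFinset (fun _ : Fin t => Finset.Icc X U)) := by
    intro a ha
    rw [Finset.mem_filter, Fintype.mem_piFinset] at ha
    rw [Finset.mem_biUnion]
    refine ⟨X ∪ Finset.univ.sup a, ?_, ?_⟩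
    · simp only [Finset.mem_filter, Finset.mem_univ, true_and]
      exact ⟨Finset.subset_union_left, ha.2⟩
    · rw [Fintype.mem_piFinset]
      intro i
      rw [Finset.mem_Icc]
      refine ⟨h𝒢 _ (ha.1 i), ?_⟩
      exact le_trans (Finset.le_sup (f := a) (Finset.mem_univ i)) Finset.subset_union_right
  have h2 := (Finset.card_le_card h1).trans Finset.card_biUnion_le
  have h3 : ∑ U ∈ ((Finset.univ : Finset (Finset (Fin n))).filter
        (fun U => X ⊆ U ∧ U.card < X.card + s)),
        (Fintype.piFinset (fun _ : Fin t => Finset.Icc X U)).card ≤ 2^n * (2^s)^t := by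
    calc _ ≤ ∑ U ∈ ((Finset.univ : Finset (Finset (Fin n))).filter
        (fun U => X ⊆ U ∧ U.card < X.card + s)), (2^s)^t := by
          apply Finset.sum_le_sum
          intro U hU
          simp only [Finset.mem_filter, Finset.mem_univ, true_and] at hU
          rw [Fintype.card_piFinset_const, Finset.card_Icc_finset hU.1]
          apply Nat.pow_le_pow_left
          apply Nat.pow_le_pow_right (by norm_num)
          omega
      _ ≤ ∑ U : Finset (Fin n), (2^s)^t :=
          Finset.sum_le_sum_of_subset (Finset.filter_subset _ _)
      _ = 2^n * (2^s)^t := by simp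
  exact_mod_cast h2.trans h3

lemma one_step {n : ℕ} (ℱ : Finset (Finset (Fin n))) (μ : Finset (Fin n) → ℝ)
    (hμ0 : ∀ B, 0 ≤ μ B) (hμ1 : ∑ B, μ B ≤ 1) (γ : ℝ) (hγ : 0 < γ) (X : Finset (Fin n))
    (t s : ℕ) (ht : 0 < t)
    (h : γ * ℱ.card ≤ ∑ A ∈ ℱ.filter (fun A => X ⊆ A),
      ∑ B ∈ Finset.univ.filter (fun B => A ⊆ B), μ B)
    (hc : 2 * 2^n * (2^s)^t ≤ (γ * ℱ.card)^t) :
    ∃ U : Finset (Fin n), X.card + s ≤ U.card ∧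
      γ^t/2 ≤ ∑ B ∈ Finset.univ.filter (fun B => U ⊆ B), μ B := by
  by_contra hcon
  push Not at hcon
  set 𝒢 := ℱ.filter (fun A => X ⊆ A) with h𝒢
  set w : Finset (Fin n) → ℝ := fun B => ((𝒢.filter (fun A => A ⊆ B)).card : ℝ) with hw
  set m : ℝ := (ℱ.card : ℝ) with hm
  have hm0 : 0 ≤ m := Nat.cast_nonneg _
  have hmpos : 0 < m := by
    rcases hm0.lt_or_eq with h0 | h0
    · exact h0
    · rw [← h0, mul_zero, zero_pow ht.ne'] at hc
      have : (0:ℝ) < 2 * 2^n * (2^s)^t := by positivity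
      linarith
  have e1 : γ * m ≤ ∑ B, μ B * w B := by
    refine h.trans (le_of_eq ?_)
    simp only [Finset.sum_filter]
    rw [Finset.sum_comm]
    apply Finset.sum_congr rfl
    intro B _
    rw [← Finset.sum_filter]
    simp [hw, mul_comm]
  -- power mean
  have e2 : (γ * m)^t ≤ ∑ B, μ B * (w B)^t := by
    set S := ∑ B, μ B with hS
    have hS0 : 0 ≤ S := Finset.sum_nonneg fun B _ => hμ0 B
    have hSpos : 0 < S := by
      rcases hS0.lt_or_eq with h0 | h0
      · exact h0
      · exfalso
        have hz : ∀ B ∈ (Finset.univ : Finset (Finset (Fin n))), μ B = 0 :=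
          (Finset.sum_eq_zero_iff_of_nonneg (fun B _ => hμ0 B)).1 (by rw [← hS, ← h0])
        have : ∑ B, μ B * w B = 0 := Finset.sum_eq_zero fun B hB => by rw [hz B hB, zero_mul]
        have : 0 < γ * m := by positivity
        linarith
    have := Real.pow_arith_mean_le_arith_mean_pow Finset.univ (fun B => μ B / S) w
      (fun B _ => div_nonneg (hμ0 B) hS0) (by rw [← Finset.sum_div, ← hS, div_self hSpos.ne'])
      (fun B _ => Nat.cast_nonneg _) t
    have r1 : ∑ B, μ B / S * w B = (∑ B, μ B * w B) / S := by
      rw [Finset.sum_div]; exact Finset.sum_congr rfl fun B _ => by ring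
    have r2 : ∑ B, μ B / S * w B ^ t = (∑ B, μ B * w B ^ t) / S := by
      rw [Finset.sum_div]; exact Finset.sum_congr rfl fun B _ => by ring
    rw [r1, r2] at this
    have hnn : 0 ≤ ∑ B, μ B * w B ^ t :=
      Finset.sum_nonneg fun B _ => mul_nonneg (hμ0 B) (pow_nonneg (Nat.cast_nonneg _) _)
    have q1 : γ * m / S ≤ (∑ B, μ B * w B) / S := by gcongr
    have q2 : (γ * m / S)^t ≤ (∑ B, μ B * w B ^ t) / S :=
      (pow_le_pow_left₀ (by positivity) q1 t).trans this
    rw [div_pow, div_le_div_iff₀ (by positivity) hSpos] at q2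
    have hSt : S^t = S * S^(t-1) := by rw [← pow_succ']; congr 1; omega
    rw [hSt] at q2
    have q3 : (γ*m)^t ≤ (∑ B, μ B * w B ^ t) * S^(t-1) := by
      have : (γ*m)^t * S ≤ ((∑ B, μ B * w B ^ t) * S^(t-1)) * S := by linarith
      exact le_of_mul_le_mul_right this hSpos
    refine q3.trans ?_
    exact mul_le_of_le_one_right hnn (pow_le_one₀ hS0 hμ1)
  -- expand
  have e3 : ∑ B, μ B * (w B)^t = ∑ a ∈ Fintype.piFinset (fun _ : Fin t => 𝒢),
      ∑ B ∈ Finset.univ.filter (fun B => X ∪ Finset.univ.sup a ⊆ B), μ B := by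
    have hX : ∀ B, (w B)^t = (((Fintype.piFinset (fun _ : Fin t => 𝒢)).filter
        (fun a => X ∪ Finset.univ.sup a ⊆ B)).card : ℝ) := by
      intro B
      simp only [hw]
      rw [← Nat.cast_pow, ← Fintype.card_piFinset_const]
      congr 2
      ext a
      simp only [Fintype.mem_piFinset, Finset.mem_filter, Finset.union_subset_iff]
      constructor
      · intro ha
        refine ⟨fun i => (ha i).1, ?_, ?_⟩
        · have := (ha ⟨0, ht⟩)
          exact (Finset.mem_filter.1 this.1).2.trans this.2
        · exact Finset.sup_le fun i _ => (ha i).2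
      · rintro ⟨h1, _, h3⟩ i
        exact ⟨h1 i, le_trans (Finset.le_sup (f := a) (Finset.mem_univ i)) h3⟩
    simp only [Finset.sum_filter]
    rw [Finset.sum_comm]
    apply Finset.sum_congr rfl
    intro B _
    rw [hX, ← Finset.sum_filter]
    simp [mul_comm]
  have hsub : ∀ U : Finset (Fin n), ∑ B ∈ Finset.univ.filter (fun B => U ⊆ B), μ B ≤ 1 :=
    fun U => (Finset.sum_le_sum_of_subset_of_nonneg (Finset.filter_subset _ _)
      (fun B _ _ => hμ0 B)).trans hμ1
  have e4 : ∑ a ∈ Fintype.piFinset (fun _ : Fin t => 𝒢),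
      ∑ B ∈ Finset.univ.filter (fun B => X ∪ Finset.univ.sup a ⊆ B), μ B
      ≤ 2^n * (2^s)^t + m^t * (γ^t/2) := by
    rw [← Finset.sum_filter_add_sum_filter_not _
      (fun a : Fin t → Finset (Fin n) => (X ∪ Finset.univ.sup a).card < X.card + s)]
    apply add_le_add
    · refine le_trans ?_ (small_tuples X t s 𝒢 (fun A hA => (Finset.mem_filter.1 hA).2))
      refine (Finset.sum_le_sum fun a _ => hsub _).trans ?_
      simp
    · refine (Finset.sum_le_sum (g := fun _ => γ^t/2) fun a ha => ?_).trans ?_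
      · rw [Finset.mem_filter] at ha
        exact (hcon _ (by have := ha.2; omega)).le
      · rw [Finset.sum_const, nsmul_eq_mul]
        apply mul_le_mul_of_nonneg_right _ (by positivity)
        have : ((Fintype.piFinset (fun _ : Fin t => 𝒢)).filter
          (fun a => ¬ (X ∪ Finset.univ.sup a).card < X.card + s)).card ≤ ℱ.card^t := by
          refine (Finset.card_filter_le _ _).trans ?_
          rw [Fintype.card_piFinset_const]
          exact Nat.pow_le_pow_left (Finset.card_filter_le _ _) _
        rw [hm]
        exact_mod_cast this
  have hex : ∃ a ∈ Fintype.piFinset (fun _ : Fin t => 𝒢), X.card + s ≤ (X ∪ Finset.univ.sup a).card := by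
    by_contra hno
    push Not at hno
    have : ∑ a ∈ Fintype.piFinset (fun _ : Fin t => 𝒢),
      ∑ B ∈ Finset.univ.filter (fun B => X ∪ Finset.univ.sup a ⊆ B), μ B
      ≤ 2^n * (2^s)^t := by
      have hf : (Fintype.piFinset (fun _ : Fin t => 𝒢)).filter
        (fun a => (X ∪ Finset.univ.sup a).card < X.card + s) =
          (Fintype.piFinset (fun _ : Fin t => 𝒢)) := Finset.filter_true_of_mem hno
      refine le_trans ?_ (small_tuples X t s 𝒢 (fun A hA => (Finset.mem_filter.1 hA).2))
      rw [hf]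
      refine (Finset.sum_le_sum fun a _ => hsub _).trans ?_
      simp
    have hp : (0:ℝ) < 2^n * (2^s)^t := by positivity
    nlinarith
  obtain ⟨a, ha, ha2⟩ := hex
  have e4' : ∑ a ∈ Fintype.piFinset (fun _ : Fin t => 𝒢),
      ∑ B ∈ Finset.univ.filter (fun B => X ∪ Finset.univ.sup a ⊆ B), μ B
      < 2^n * (2^s)^t + m^t * (γ^t/2) := by
    rw [← Finset.sum_filter_add_sum_filter_not _
      (fun a : Fin t → Finset (Fin n) => (X ∪ Finset.univ.sup a).card < X.card + s)]
    apply add_lt_add_of_le_of_lt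
    · refine le_trans ?_ (small_tuples X t s 𝒢 (fun A hA => (Finset.mem_filter.1 hA).2))
      refine (Finset.sum_le_sum fun a _ => hsub _).trans ?_
      simp
    · refine (Finset.sum_lt_sum_of_nonempty (g := fun _ => γ^t/2) ?_ fun a ha => ?_).trans_le ?_
      · exact ⟨a, Finset.mem_filter.2 ⟨ha, by omega⟩⟩
      · rw [Finset.mem_filter] at ha
        exact (hcon _ (by have := ha.2; omega))
      · rw [Finset.sum_const, nsmul_eq_mul]
        apply mul_le_mul_of_nonneg_right _ (by positivity)
        have : ((Fintype.piFinset (fun _ : Fin t => 𝒢)).filter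
          (fun a => ¬ (X ∪ Finset.univ.sup a).card < X.card + s)).card ≤ ℱ.card^t := by
          refine (Finset.card_filter_le _ _).trans ?_
          rw [Fintype.card_piFinset_const]
          exact Nat.pow_le_pow_left (Finset.card_filter_le _ _) _
        rw [hm]
        exact_mod_cast this
  rw [mul_pow] at hc e2
  linarith [e3 ▸ e2]

lemma Phi_step {n : ℕ} (ℱ : Finset (Finset (Fin n))) (γ : ℝ) (hγ : 0 < γ) (X : Finset (Fin n))
    (t s j : ℕ) (ht : 0 < t) (hm : 0 < ℱ.card)
    (h : γ ≤ Phi ℱ (j+1) X)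
    (hc : 2 * 2^n * (2^s)^t ≤ (γ * ℱ.card)^t) :
    ∃ U : Finset (Fin n), X.card + s ≤ U.card ∧ γ^t/2 ≤ Phi ℱ j U := by
  have hm' : (0:ℝ) < ℱ.card := by exact_mod_cast hm
  have key : ∃ μ : Finset (Fin n) → ℝ, (∀ B, 0 ≤ μ B) ∧ (∑ B, μ B ≤ 1) ∧
      ∀ U, Phi ℱ j U = ∑ B ∈ Finset.univ.filter (fun B => U ⊆ B), μ B := by
    cases j with
    | zero =>
      refine ⟨fun B => if B = Finset.univ then 1 else 0, ?_, ?_, ?_⟩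
      · intro B; dsimp only; split_ifs <;> norm_num
      · simp
      · intro U; simp [Phi, Finset.sum_ite_eq']
    | succ j =>
      refine ⟨fun B => if B ∈ ℱ then Phi ℱ j B / ℱ.card else 0, ?_, ?_, ?_⟩
      · intro B; dsimp only; split_ifs
        · exact div_nonneg (Phi_nonneg _ _ _) hm'.le
        · exact le_rfl
      · rw [← Finset.sum_filter, ← Finset.sum_div]
        apply div_le_one_of_le₀ _ hm'.le
        refine (Finset.sum_le_sum fun B _ => Phi_le_one _ _ _).trans ?_
        simp
      · intro U
        simp only [Phi]
        rw [Finset.sum_div, ← Finset.sum_filter, Finset.filter_filter]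
        apply Finset.sum_congr _ (fun _ _ => rfl)
        ext B; simp [and_comm]
  obtain ⟨μ, h0, h1, h2⟩ := key
  simp only [h2]
  apply one_step ℱ μ h0 h1 γ hγ X t s ht _ hc
  simp only [Phi] at h
  rw [le_div_iff₀ hm'] at h
  simpa only [h2] using h

lemma chain_bound (k : ℕ) (j : ℕ) : ∀ γ : ℝ, 0 < γ → ∃ L : ℕ, ∀ ℓ ≥ L, ∀ s : ℕ,
    s * (k+1) ≤ k * ℓ + (k+1) → ∀ n, n = k * ℓ → ∀ ℱ : Finset (Finset (Fin n)),
    2^ℓ ≤ ℱ.card → ∀ X, γ ≤ Phi ℱ j X → X.card + j * s ≤ n := by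
  induction j with
  | zero =>
    intro γ _
    refine ⟨0, fun ℓ _ s _ n _ ℱ _ X _ => ?_⟩
    simpa using Finset.card_le_univ X
  | succ j ih =>
    intro γ hγ
    set t := (k+1)^2 with ht
    obtain ⟨L, hL⟩ := ih (γ^t/2) (by positivity)
    obtain ⟨L', hL'⟩ := pow_unbounded_of_one_lt (2 * 2^t / γ^t) (one_lt_two : (1:ℝ) < 2)
    refine ⟨max L L', fun ℓ hℓ s hs n hn ℱ hℱ X hX => ?_⟩
    have hm : 0 < ℱ.card := lt_of_lt_of_le (by positivity) hℱ
    have hc : (2:ℝ) * 2^n * (2^s)^t ≤ (γ * ℱ.card)^t := by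
      have h1 : (γ * 2^ℓ)^t ≤ (γ * ℱ.card)^t := by
        have : ((2:ℝ)^ℓ) ≤ ℱ.card := by exact_mod_cast hℱ
        gcongr
      refine le_trans ?_ h1
      have h2 : 2 * 2^t ≤ γ^t * 2^ℓ := by
        have : (2:ℝ)^L' ≤ 2^ℓ := pow_le_pow_right₀ (by norm_num) ((le_max_right _ _).trans hℓ)
        have h3 := hL'.le.trans this
        rw [div_le_iff₀ (by positivity)] at h3
        linarith
      have h4 : n + s * t + ℓ ≤ ℓ * t + t := by
        rw [hn, ht]; nlinarith
      have h5 : (2:ℝ) * 2^n * (2^s)^t * 2^ℓ ≤ 2 * 2^t * (2^ℓ)^t := by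
        have : (2:ℝ)^(n + s * t + ℓ) ≤ 2^(ℓ * t + t) := pow_le_pow_right₀ (by norm_num) h4
        rw [pow_add, pow_add, pow_add, pow_mul, pow_mul] at this
        linarith
      have h6 : 2 * 2^t * (2^ℓ)^t ≤ γ^t * 2^ℓ * (2^ℓ)^t := by gcongr
      have h7 : (2:ℝ) * 2^n * (2^s)^t * 2^ℓ ≤ (γ * 2^ℓ)^t * 2^ℓ := by
        rw [mul_pow]; linarith
      exact le_of_mul_le_mul_right h7 (by positivity)
    obtain ⟨U, hU1, hU2⟩ := Phi_step ℱ γ hγ X t s j (by positivity) hm hX hc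
    have := hL ℓ ((le_max_left _ _).trans hℓ) s hs n hn ℱ hℱ U hU2
    linarith

noncomputable def HH {n : ℕ} (ℱ : Finset (Finset (Fin n))) (g : ℝ) : ℕ → Finset (Finset (Fin n))
  | 0 => ℱ
  | j+1 => (HH ℱ g j).filter (fun A => g ≤ (((HH ℱ g j).filter (fun B => A ⊂ B)).card : ℝ))

lemma HH_succ_subset {n : ℕ} (ℱ : Finset (Finset (Fin n))) (g : ℝ) (j : ℕ) :
    HH ℱ g (j+1) ⊆ HH ℱ g j := Finset.filter_subset _ _

lemma HH_subset {n : ℕ} (ℱ : Finset (Finset (Fin n))) (g : ℝ) (j : ℕ) :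
    HH ℱ g j ⊆ ℱ := by
  induction j with
  | zero => exact subset_rfl
  | succ j ih => exact (HH_succ_subset ℱ g j).trans ih

lemma HH_Phi {n : ℕ} (ℱ : Finset (Finset (Fin n))) (γ : ℝ) (hγ : 0 < γ) (hm : 0 < ℱ.card) (j : ℕ) :
    ∀ A ∈ HH ℱ (γ * ℱ.card) j, γ^j ≤ Phi ℱ j A := by
  have hm' : (0:ℝ) < ℱ.card := by exact_mod_cast hm
  induction j with
  | zero => intro A _; simp [Phi]
  | succ j ih =>
    intro A hA
    simp only [HH, Finset.mem_filter] at hA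
    simp only [Phi]
    rw [le_div_iff₀ hm']
    calc γ^(j+1) * ℱ.card = (γ * ℱ.card) * γ^j := by ring
      _ ≤ (((HH ℱ (γ * ℱ.card) j).filter (fun B => A ⊂ B)).card : ℝ) * γ^j := by
          gcongr; exact hA.2
      _ = ∑ B ∈ (HH ℱ (γ * ℱ.card) j).filter (fun B => A ⊂ B), γ^j := by simp
      _ ≤ ∑ B ∈ (HH ℱ (γ * ℱ.card) j).filter (fun B => A ⊂ B), Phi ℱ j B :=
          Finset.sum_le_sum fun B hB => ih B (Finset.mem_filter.1 hB).1
      _ ≤ _ := by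
          apply Finset.sum_le_sum_of_subset_of_nonneg
          · intro B hB
            rw [Finset.mem_filter] at hB ⊢
            exact ⟨HH_subset _ _ _ hB.1, hB.2.1⟩
          · intro B _ _; exact Phi_nonneg _ _ _

lemma HH_small (k : ℕ) (γ : ℝ) (hγ : 0 < γ) : ∃ L : ℕ, ∀ ℓ ≥ L, ∀ n, n = k * ℓ →
    ∀ ℱ : Finset (Finset (Fin n)), 2^ℓ ≤ ℱ.card →
    ((HH ℱ (γ * ℱ.card) k).card : ℝ) < γ * ℱ.card := by
  obtain ⟨L, hL⟩ := chain_bound k (k+1) (γ^(k+1)) (by positivity)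
  refine ⟨L, fun ℓ hℓ n hn ℱ hℱ => ?_⟩
  by_contra hcon
  push Not at hcon
  have hm : 0 < ℱ.card := lt_of_lt_of_le (by positivity) hℱ
  have hm' : (0:ℝ) < ℱ.card := by exact_mod_cast hm
  have hdm := Nat.div_add_mod (k*ℓ) (k+1)
  have hlt := Nat.mod_lt (k*ℓ) (Nat.succ_pos k)
  simp only [Nat.succ_eq_add_one] at hlt
  have hs : (k*ℓ/(k+1) + 1) * (k+1) ≤ k * ℓ + (k+1) := by
    rw [Nat.add_mul, one_mul]; exact Nat.add_le_add_right (Nat.div_mul_le_self _ _) _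
  have := hL ℓ hℓ (k*ℓ/(k+1) + 1) hs n hn ℱ hℱ ∅ (by
    simp only [Phi]
    rw [le_div_iff₀ hm']
    calc γ^(k+1) * ℱ.card = (γ * ℱ.card) * γ^k := by ring
      _ ≤ ((HH ℱ (γ * ℱ.card) k).card : ℝ) * γ^k := by gcongr
      _ = ∑ B ∈ (HH ℱ (γ * ℱ.card) k), γ^k := by simp
      _ ≤ ∑ B ∈ (HH ℱ (γ * ℱ.card) k), Phi ℱ k B :=
          Finset.sum_le_sum fun B hB => HH_Phi ℱ γ hγ hm k B hB
      _ ≤ _ := by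
          apply Finset.sum_le_sum_of_subset_of_nonneg
          · intro B hB
            rw [Finset.mem_filter]
            exact ⟨HH_subset _ _ _ hB, Finset.empty_subset _⟩
          · intro B _ _; exact Phi_nonneg _ _ _)
  rw [Finset.card_empty, hn] at this
  rw [Nat.mul_add, mul_one] at this
  omega


lemma HH_sum {n : ℕ} (ℱ : Finset (Finset (Fin n))) (g : ℝ) (f : Finset (Fin n) → ℝ) (j : ℕ) :
    ∑ A ∈ ℱ, f A = ∑ i ∈ Finset.range j, ∑ A ∈ HH ℱ g i \ HH ℱ g (i+1), f A
      + ∑ A ∈ HH ℱ g j, f A := by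
  induction j with
  | zero => simp [HH]
  | succ j ih =>
    rw [ih, Finset.sum_range_succ, ← Finset.sum_sdiff (HH_succ_subset ℱ g j)]
    ring

lemma HH_anti {n : ℕ} (ℱ : Finset (Finset (Fin n))) (g : ℝ) {i j : ℕ} (h : i ≤ j) :
    HH ℱ g j ⊆ HH ℱ g i := by
  induction j, h using Nat.le_induction with
  | base => exact subset_rfl
  | succ j _ ih => exact (HH_succ_subset ℱ g j).trans ih

lemma sum_lt_pairs (l : ℕ → ℝ) (k : ℕ) :
    ∑ j ∈ Finset.range k, ∑ i ∈ Finset.range j, l i * l j =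
      ((∑ i ∈ Finset.range k, l i)^2 - ∑ i ∈ Finset.range k, (l i)^2) / 2 := by
  induction k with
  | zero => simp
  | succ k ih =>
    rw [Finset.sum_range_succ, ih, Finset.sum_range_succ, Finset.sum_range_succ, ← Finset.sum_mul]
    ring

lemma compCount_eq {n : ℕ} (ℱ : Finset (Finset (Fin n))) :
    compCount ℱ = ∑ A ∈ ℱ, (ℱ.filter (fun B => A ⊂ B)).card := by
  unfold compCount crossComp
  rw [Finset.card_filter, Finset.sum_product]
  simp only [Finset.card_filter]

lemma count_main {n : ℕ} (ℱ : Finset (Finset (Fin n))) (γ : ℝ) (hγ : 0 < γ) (k : ℕ)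
    (L : ℕ → Finset (Finset (Fin n)))
    (hL : ∀ i, L i = HH ℱ (γ * ℱ.card) i \ HH ℱ (γ * ℱ.card) (i+1))
    (hH : ((HH ℱ (γ * ℱ.card) k).card : ℝ) < γ * ℱ.card) :
    (compCount ℱ : ℝ) ≤ 2 * γ * (ℱ.card : ℝ)^2 +
      ∑ j ∈ Finset.range k, ∑ i ∈ Finset.range j, (((L i).card : ℝ) * (L j).card -
        ∑ A ∈ L j, (((L i).filter (fun B => ¬ A ⊂ B)).card : ℝ)) := by
  set g := γ * (ℱ.card : ℝ) with hg
  have hg0 : 0 ≤ g := by positivity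
  have hup : ∀ j, ∀ A ∈ L j, ((ℱ.filter (fun B => A ⊂ B)).card : ℝ) ≤
      g + ∑ i ∈ Finset.range j, (((L i).card : ℝ) - ((L i).filter (fun B => ¬ A ⊂ B)).card) := by
    intro j A hA
    have h1 : ((ℱ.filter (fun B => A ⊂ B)).card : ℝ) = ∑ B ∈ ℱ, if A ⊂ B then (1:ℝ) else 0 := by
      simp
    rw [h1, HH_sum ℱ g _ j, add_comm]
    apply add_le_add
    · rw [hL] at hA
      rw [Finset.mem_sdiff] at hA
      have := hA.2
      simp only [HH, Finset.mem_filter, not_and, not_le] at this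
      have := this hA.1
      simpa using this.le
    · apply Finset.sum_le_sum
      intro i _
      rw [← hL i, ← Finset.sum_filter]
      have := Finset.card_filter_add_card_filter_not (s := L i) (fun B => A ⊂ B)
      have h2 : (((L i).filter (fun B => A ⊂ B)).card : ℝ) + ((L i).filter (fun B => ¬ A ⊂ B)).card
        = (L i).card := by exact_mod_cast this
      simp only [Finset.sum_const, nsmul_eq_mul, mul_one]
      linarith
  have hlsum : ∑ j ∈ Finset.range k, ((L j).card : ℝ) ≤ ℱ.card := by
    have := HH_sum ℱ g (fun _ => 1) k
    simp only [← hL, Finset.sum_const, nsmul_eq_mul, mul_one] at this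
    have h0 : (0:ℝ) ≤ (HH ℱ g k).card := Nat.cast_nonneg _
    linarith
  rw [compCount_eq]
  push_cast
  rw [HH_sum ℱ g _ k]
  have hA : ∑ i ∈ Finset.range k, ∑ A ∈ HH ℱ g i \ HH ℱ g (i+1),
      ((ℱ.filter (fun B => A ⊂ B)).card : ℝ) ≤ g * ℱ.card +
      ∑ j ∈ Finset.range k, ∑ i ∈ Finset.range j, (((L i).card : ℝ) * (L j).card -
        ∑ A ∈ L j, (((L i).filter (fun B => ¬ A ⊂ B)).card : ℝ)) := by
    simp only [← hL]
    calc _ ≤ ∑ j ∈ Finset.range k, ∑ A ∈ L j, (g + ∑ i ∈ Finset.range j,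
          (((L i).card : ℝ) - ((L i).filter (fun B => ¬ A ⊂ B)).card)) :=
        Finset.sum_le_sum fun j _ => Finset.sum_le_sum fun A hA => hup j A hA
      _ = ∑ j ∈ Finset.range k, ((L j).card * g + ∑ i ∈ Finset.range j,
          (((L i).card : ℝ) * (L j).card -
          ∑ A ∈ L j, (((L i).filter (fun B => ¬ A ⊂ B)).card : ℝ))) := by
          apply Finset.sum_congr rfl
          intro j _
          rw [Finset.sum_add_distrib, Finset.sum_comm]
          simp [Finset.sum_sub_distrib, mul_comm]
      _ ≤ _ := by
          rw [Finset.sum_add_distrib, ← Finset.sum_mul, mul_comm g]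
          gcongr
  have hB : ∑ A ∈ HH ℱ g k, ((ℱ.filter (fun B => A ⊂ B)).card : ℝ) ≤ g * ℱ.card := by
    calc _ ≤ ∑ A ∈ HH ℱ g k, (ℱ.card : ℝ) :=
          Finset.sum_le_sum fun A _ => by exact_mod_cast Finset.card_filter_le _ _
      _ = (HH ℱ g k).card * (ℱ.card : ℝ) := by simp
      _ ≤ _ := by gcongr
  have : 2 * γ * (ℱ.card : ℝ)^2 = g * ℱ.card + g * ℱ.card := by rw [hg]; ring
  linarith

/-- rough structure -/
lemma count_conclusion {n : ℕ} (ℱ : Finset (Finset (Fin n))) (γ : ℝ) (hγ : 0 < γ) (hγ1 : γ ≤ 1)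
    (k : ℕ) (hk : 2 ≤ k) (N : ℝ) (hN : 1 ≤ N) (hNk : 2 ≤ γ * k * N)
    (L : ℕ → Finset (Finset (Fin n)))
    (hL : ∀ i, L i = HH ℱ (γ * ℱ.card) i \ HH ℱ (γ * ℱ.card) (i+1))
    (hH : ((HH ℱ (γ * ℱ.card) k).card : ℝ) < γ * ℱ.card)
    (hcard : (ℱ.card : ℝ) = k * N - k + 1)
    (hcomp : (k : ℝ) * (k-1) / 2 * (N-1)^2 ≤ compCount ℱ) :
    ∑ j ∈ Finset.range k, (((L j).card : ℝ) - N)^2 + 2 * ∑ j ∈ Finset.range k,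
      ∑ i ∈ Finset.range j, ∑ A ∈ L j, (((L i).filter (fun B => ¬ A ⊂ B)).card : ℝ)
      ≤ 7 * γ * k^2 * N^2 := by
  have hk' : (2:ℝ) ≤ k := by exact_mod_cast hk
  have h1 := count_main ℱ γ hγ k L hL hH
  simp only [Finset.sum_sub_distrib] at h1
  rw [sum_lt_pairs (fun i => ((L i).card : ℝ))] at h1
  have h2 := HH_sum ℱ (γ * ℱ.card) (fun _ => 1) k
  simp only [← hL, Finset.sum_const, nsmul_eq_mul, mul_one] at h2
  have h3 : ∑ j ∈ Finset.range k, (((L j).card : ℝ) - N)^2 =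
      ∑ j ∈ Finset.range k, ((L j).card : ℝ)^2 - 2 * N * ∑ j ∈ Finset.range k, ((L j).card : ℝ)
        + k * N^2 := by
    have : ∀ j, (((L j).card : ℝ) - N)^2 = ((L j).card : ℝ)^2 - 2 * N * ((L j).card : ℝ) + N^2 :=
      fun j => by ring
    simp only [this, Finset.sum_add_distrib, Finset.sum_sub_distrib, ← Finset.mul_sum]
    simp
  rw [h3]
  set S := ∑ j ∈ Finset.range k, ((L j).card : ℝ) with hS
  set Q := ∑ j ∈ Finset.range k, ((L j).card : ℝ)^2
  set E := ∑ j ∈ Finset.range k,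
      ∑ i ∈ Finset.range j, ∑ A ∈ L j, (((L i).filter (fun B => ¬ A ⊂ B)).card : ℝ)
  set m := (ℱ.card : ℝ) with hm
  have hS0 : 0 ≤ S := Finset.sum_nonneg fun j _ => Nat.cast_nonneg _
  have hh0 : (0:ℝ) ≤ (HH ℱ (γ * m) k).card := Nat.cast_nonneg _
  have hSm : S ≤ m := by linarith
  have hSm2 : S^2 ≤ m^2 := pow_le_pow_left₀ hS0 hSm 2
  have hSl : (1-γ) * m ≤ S := by linarith
  have hmk : m ≤ k * N := by rw [hcard]; linarith
  have hm0 : 0 ≤ m := hS0.trans hSm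
  have hm2 : m^2 ≤ k^2*N^2 := by rw [← mul_pow]; exact pow_le_pow_left₀ hm0 hmk 2
  -- Q + 2E ≤ 4γ m² + k N²
  have hA : Q + 2 * E ≤ 4 * γ * m^2 + k * N^2 := by
    have : m^2 - k * (k-1) * (N-1)^2 ≤ k * N^2 := by rw [hcard]; nlinarith
    nlinarith
  have hB : 2 * N * ((1-γ) * m) ≤ 2 * N * S := by gcongr
  have hC : 2 * k * N^2 - 2 * N * ((1-γ) * m) ≤ 2 * k * γ * N^2 + 2 * k * N := by
    rw [hcard]; nlinarith [mul_nonneg hγ.le (by linarith : (0:ℝ) ≤ N), mul_nonneg (mul_nonneg hγ.le (by linarith : (0:ℝ) ≤ N)) (by linarith : (0:ℝ) ≤ (k:ℝ)-1), mul_nonneg (sub_nonneg.2 hγ1) (by linarith : (0:ℝ) ≤ N)]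
  have hD : 4 * γ * m^2 ≤ 4 * γ * (k^2 * N^2) := by gcongr
  have hE : 2 * k * N ≤ γ * k^2 * N^2 := by
    have := mul_le_mul_of_nonneg_right hNk (by positivity : 0 ≤ k * N)
    nlinarith
  have hF : 2 * k * γ * N^2 ≤ γ * k^2 * N^2 := by
    have : 0 ≤ γ * k * N^2 * (k - 2) := mul_nonneg (by positivity) (by linarith)
    nlinarith
  have hG : 0 ≤ γ * k^2 * N^2 := by positivity
  nlinarith

lemma markov {α : Type*} (S : Finset α) (f : α → ℝ) (hf : ∀ a, 0 ≤ f a) (E c : ℝ)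
    (hE : ∑ a ∈ S, f a ≤ E) : ((S.filter (fun a => c < f a)).card : ℝ) * c ≤ E := by
  classical
  calc ((S.filter (fun a => c < f a)).card : ℝ) * c = ∑ a ∈ S.filter (fun a => c < f a), c := by simp
    _ ≤ ∑ a ∈ S.filter (fun a => c < f a), f a :=
        Finset.sum_le_sum fun a ha => (Finset.mem_filter.1 ha).2.le
    _ ≤ ∑ a ∈ S, f a := Finset.sum_le_sum_of_subset_of_nonneg (Finset.filter_subset _ _)
        (fun a _ _ => hf a)
    _ ≤ E := hE

lemma prune {n : ℕ} (k : ℕ) (hk : 2 ≤ k) (N : ℝ) (hN : 1 ≤ N)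
    (L : ℕ → Finset (Finset (Fin n)))
    (h : ∑ j ∈ Finset.range k, (((L j).card : ℝ) - N)^2 + 2 * ∑ j ∈ Finset.range k,
      ∑ i ∈ Finset.range j, ∑ A ∈ L j, (((L i).filter (fun B => ¬ A ⊂ B)).card : ℝ)
      ≤ N^2 / (1024 * k^2)) :
    ∃ P : ℕ → Finset (Finset (Fin n)), (∀ i, P i ⊆ L i) ∧
      (∀ i < k, (1 - 1/(16*k)) * N ≤ (P i).card) ∧
      (∀ j < k, ∀ i < j, (∀ A ∈ P j, (((P i).filter (fun B => ¬ A ⊂ B)).card : ℝ) ≤ N/64) ∧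
        (∀ B ∈ P i, (((P j).filter (fun A => ¬ A ⊂ B)).card : ℝ) ≤ N/64)) := by
  have hk' : (2:ℝ) ≤ k := by exact_mod_cast hk
  set E := ∑ j ∈ Finset.range k,
      ∑ i ∈ Finset.range j, ∑ A ∈ L j, (((L i).filter (fun B => ¬ A ⊂ B)).card : ℝ) with hE
  set θ := N^2 / (1024 * (k:ℝ)^2) with hθ
  have hnn : ∀ j i, (0:ℝ) ≤ ∑ A ∈ L j, (((L i).filter (fun B => ¬ A ⊂ B)).card : ℝ) :=
    fun j i => Finset.sum_nonneg fun A _ => Nat.cast_nonneg _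
  have hE0 : 0 ≤ E := Finset.sum_nonneg fun j _ => Finset.sum_nonneg fun i _ => hnn j i
  have hE1 : ∀ j < k, ∀ i < j, ∑ A ∈ L j, (((L i).filter (fun B => ¬ A ⊂ B)).card : ℝ) ≤ E := by
    intro j hj i hi
    refine le_trans ?_ (Finset.single_le_sum (f := fun j => ∑ i ∈ Finset.range j,
      ∑ A ∈ L j, (((L i).filter (fun B => ¬ A ⊂ B)).card : ℝ))
      (fun j _ => Finset.sum_nonneg fun i _ => hnn j i) (Finset.mem_range.2 hj))
    exact Finset.single_le_sum (f := fun i =>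
      ∑ A ∈ L j, (((L i).filter (fun B => ¬ A ⊂ B)).card : ℝ))
      (fun i _ => hnn j i) (Finset.mem_range.2 hi)
  have hsq0 : 0 ≤ ∑ j ∈ Finset.range k, (((L j).card : ℝ) - N)^2 :=
    Finset.sum_nonneg fun j _ => sq_nonneg _
  have hEθ : 2 * E ≤ θ := by linarith
  -- the bad functions
  let D : ℕ → ℕ → Finset (Fin n) → ℝ := fun j i A =>
    if i < j then (((L i).filter (fun B => ¬ A ⊂ B)).card : ℝ)
    else if j < i then (((L i).filter (fun B => ¬ B ⊂ A)).card : ℝ) else 0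
  have hD0 : ∀ j i A, 0 ≤ D j i A := by
    intro j i A; simp only [D]; split_ifs <;> positivity
  have hDE : ∀ j < k, ∀ i < k, ∑ A ∈ L j, D j i A ≤ E := by
    intro j hj i hi
    rcases lt_trichotomy i j with hij | hij | hij
    · simp only [D, hij, if_true]; exact hE1 j hj i hij
    · subst hij; simpa [D] using hE0
    · have : ¬ i < j := by omega
      simp only [D, hij, this, if_true, if_false]
      refine le_trans (le_of_eq ?_) (hE1 i hi j hij)
      simp only [Finset.card_filter]
      push_cast
      rw [Finset.sum_comm]
  let P : ℕ → Finset (Finset (Fin n)) := fun j =>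
    (L j).filter (fun A => ∀ i ∈ Finset.range k, D j i A ≤ N/64)
  have hPL : ∀ i, P i ⊆ L i := fun i => Finset.filter_subset _ _
  refine ⟨P, hPL, ?_, ?_⟩
  · intro j hj
    have h1 : (((L j).card : ℝ) - N)^2 ≤ θ := by
      have := Finset.single_le_sum (f := fun j => (((L j).card : ℝ) - N)^2)
        (fun j _ => sq_nonneg _) (Finset.mem_range.2 hj)
      linarith
    have h2 : N - N/(32*k) ≤ (L j).card := by
      have : θ = (N/(32*k))^2 := by rw [hθ]; field_simp; norm_num
      rw [this] at h1
      have := abs_le_of_sq_le_sq h1 (by positivity)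
      rw [abs_le] at this
      linarith [this.1]
    have h3 : L j ⊆ P j ∪ (Finset.range k).biUnion
        (fun i => (L j).filter (fun A => N/64 < D j i A)) := by
      intro A hA
      rw [Finset.mem_union]
      by_cases hAP : ∀ i ∈ Finset.range k, D j i A ≤ N/64
      · left; exact Finset.mem_filter.2 ⟨hA, hAP⟩
      · right
        push Not at hAP
        obtain ⟨i, hi, hi2⟩ := hAP
        exact Finset.mem_biUnion.2 ⟨i, hi, Finset.mem_filter.2 ⟨hA, hi2⟩⟩
    have h4 : (L j).card ≤ (P j).card + ∑ i ∈ Finset.range k,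
        ((L j).filter (fun A => N/64 < D j i A)).card :=
      (Finset.card_le_card h3).trans ((Finset.card_union_le _ _).trans
        (Nat.add_le_add_left Finset.card_biUnion_le _))
    have h5 : ∑ i ∈ Finset.range k, (((L j).filter (fun A => N/64 < D j i A)).card : ℝ)
        ≤ ∑ i ∈ Finset.range k, 64 * E / N := by
      apply Finset.sum_le_sum
      intro i hi
      have := markov (L j) (D j i) (hD0 j i) E (N/64) (hDE j hj i (Finset.mem_range.1 hi))
      rw [le_div_iff₀ (by linarith)]
      linarith
    have h6 : ((L j).card : ℝ) ≤ (P j).card + ∑ i ∈ Finset.range k,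
        (((L j).filter (fun A => N/64 < D j i A)).card : ℝ) := by exact_mod_cast h4
    rw [Finset.sum_const, Finset.card_range, nsmul_eq_mul] at h5
    have h7 : (k:ℝ) * (64 * E / N) ≤ N / (32*k) := by
      have : (k:ℝ) * (64 * E / N) ≤ (k:ℝ) * (64 * (θ/2) / N) := by gcongr; linarith
      refine this.trans (le_of_eq ?_)
      rw [hθ]; field_simp; norm_num
    have h8 : (1 - 1/(16*(k:ℝ))) * N = N - N/(32*k) - N/(32*k) := by field_simp; ring
    rw [h8]; linarith
  · intro j hj i hi
    constructor
    · intro A hA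
      have := (Finset.mem_filter.1 hA).2 i (Finset.mem_range.2 (by omega))
      simp only [D, hi, if_true] at this
      refine le_trans ?_ this
      exact_mod_cast Finset.card_le_card (Finset.filter_subset_filter _ (hPL i))
    · intro A hA
      have := (Finset.mem_filter.1 hA).2 j (Finset.mem_range.2 (by omega))
      have h' : ¬ j < i := by omega
      simp only [D, hi, h', if_true, if_false] at this
      refine le_trans ?_ this
      exact_mod_cast Finset.card_le_card (Finset.filter_subset_filter _ (hPL j))

lemma stability (k : ℕ) (hk : 2 ≤ k) : ∃ L0 : ℕ, ∀ ℓ ≥ L0, ∀ n, n = k * ℓ →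
    ∀ ℱ : Finset (Finset (Fin n)), ℱ.card = k * 2^ℓ - k + 1 →
    (k : ℝ) * (k-1) / 2 * (2^ℓ-1)^2 ≤ compCount ℱ →
    ∃ P : ℕ → Finset (Finset (Fin n)), (∀ i, P i ⊆ ℱ) ∧ 
      (∀ i < k, ∀ j < k, i ≠ j → Disjoint (P i) (P j)) ∧
      (∀ i < k, (1 - 1/(16*k)) * (2:ℝ)^ℓ ≤ (P i).card) ∧
      (∀ j < k, ∀ i < j, (∀ A ∈ P i, (((P j).filter (fun B => ¬ A ⊂ B)).card : ℝ) ≤ 2^ℓ/64) ∧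
        (∀ B ∈ P j, (((P i).filter (fun A => ¬ A ⊂ B)).card : ℝ) ≤ 2^ℓ/64)) := by
  have hk' : (2:ℝ) ≤ k := by exact_mod_cast hk
  set γ : ℝ := 1 / (7168 * k^4) with hγ
  have hγ0 : 0 < γ := by positivity
  have hγ1 : γ ≤ 1 := by
    rw [hγ]; apply div_le_one_of_le₀ _ (by positivity)
    have : (1:ℝ) ≤ k^4 := one_le_pow₀ (by linarith)
    linarith
  obtain ⟨L1, hL1⟩ := HH_small k γ hγ0
  obtain ⟨L2, hL2⟩ := pow_unbounded_of_one_lt (2 / (γ * k)) (one_lt_two : (1:ℝ) < 2)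
  refine ⟨max L1 L2, fun ℓ hℓ n hn ℱ hcard hcomp => ?_⟩
  have hN1 : (1:ℝ) ≤ 2^ℓ := one_le_pow₀ (by norm_num)
  have hN1' : 1 ≤ 2^ℓ := Nat.one_le_two_pow
  have hkk : k ≤ k * 2^ℓ := Nat.le_mul_of_pos_right _ hN1'
  have hcardR : (ℱ.card : ℝ) = k * 2^ℓ - k + 1 := by
    rw [hcard]; push_cast [Nat.cast_sub hkk]; ring
  have hle : 2^ℓ ≤ ℱ.card := by
    have : ((2^ℓ : ℕ) : ℝ) ≤ ℱ.card := by rw [hcardR]; push_cast; nlinarith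
    exact_mod_cast this
  have hNk : 2 ≤ γ * k * (2:ℝ)^ℓ := by
    have : (2:ℝ)^L2 ≤ 2^ℓ := pow_le_pow_right₀ (by norm_num) ((le_max_right _ _).trans hℓ)
    have := hL2.le.trans this
    rw [div_le_iff₀ (by positivity)] at this
    linarith
  set g := γ * (ℱ.card : ℝ) with hg
  have h1 := count_conclusion ℱ γ hγ0 hγ1 k hk (2^ℓ) hN1 hNk (fun i => HH ℱ g i \ HH ℱ g (i+1))
    (fun i => rfl) (hL1 ℓ ((le_max_left _ _).trans hℓ) n hn ℱ hle) hcardR hcomp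
  have h2 : 7 * γ * k^2 * (2^ℓ)^2 = ((2:ℝ)^ℓ)^2 / (1024 * k^2) := by
    rw [hγ]; field_simp; norm_num
  rw [h2] at h1
  obtain ⟨P, hP1, hP2, hP3⟩ := prune k hk (2^ℓ) hN1 _ h1
  have hdis : ∀ i j, i < j → Disjoint (P i) (P j) := by
    intro i j hij
    rw [Finset.disjoint_left]
    intro A hA hB
    have h1 := (Finset.mem_sdiff.1 (hP1 i hA)).2
    have h2 := (Finset.mem_sdiff.1 (hP1 j hB)).1
    exact h1 (HH_anti ℱ g (by omega) h2)
  refine ⟨fun i => P (k-1-i), ?_, ?_, ?_, ?_⟩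
  · intro i
    exact (hP1 _).trans (Finset.sdiff_subset.trans (HH_subset _ _ _))
  · intro i hi j hj hij
    rcases lt_or_gt_of_ne hij with h | h
    · exact (hdis (k-1-j) (k-1-i) (by omega)).symm
    · exact hdis (k-1-i) (k-1-j) (by omega)
  · intro i hi
    exact hP2 _ (by omega)
  · intro j hj i hi
    exact hP3 (k-1-i) (by omega) (k-1-j) (by omega)

lemma kappa_bound : (1 + Real.exp (-2)) * Real.exp (1/16) ≤ 5/4 := by
  have h1 : Real.exp (-2) ≤ 0.14 := by
    rw [Real.exp_neg]
    have he := Real.exp_one_gt_d9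
    have : Real.exp 2 = Real.exp 1 * Real.exp 1 := by rw [← Real.exp_add]; norm_num
    rw [inv_le_comm₀ (Real.exp_pos _) (by norm_num), this]
    nlinarith
  have h2 : Real.exp (1/16) ≤ 16/15 := by
    have h := Real.add_one_le_exp (-(1/16) : ℝ)
    rw [Real.exp_neg] at h
    rw [← inv_le_inv₀ (by norm_num) (Real.exp_pos _)]
    linarith
  have h3 : 0 < Real.exp (1/16) := Real.exp_pos _
  have h4 : 0 < Real.exp (-2) := Real.exp_pos _
  nlinarith

lemma skew_bound {n : ℕ} (P : Finset (Finset (Fin n))) (D Z : Finset (Fin n)) (hZ : Z ⊆ D)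
    (hD : ∀ x, x ∉ D → (∀ A ∈ P, x ∉ A) ∨ (∀ A ∈ P, x ∈ A))
    (hs : ∀ x ∈ Z, (((P.filter (fun A => x ∈ A)).card : ℝ) ≤ P.card / 32) ∨
      (((P.filter (fun A => x ∉ A)).card : ℝ) ≤ P.card / 32)) :
    (P.card : ℝ) ≤ 2^(D \ Z).card * (5/4)^Z.card := by
  classical
  let E : Finset (Fin n) → Finset (Fin n) := fun A => Z.filter (fun x =>
    if (((P.filter (fun A => x ∈ A)).card : ℝ) ≤ P.card / 32) then x ∈ A else x ∉ A)
  have hE : ∑ A ∈ P, ((E A).card : ℝ) ≤ Z.card * (P.card / 32) := by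
    have : ∑ A ∈ P, ((E A).card : ℝ) = ∑ x ∈ Z, ((P.filter (fun A => x ∈ E A)).card : ℝ) := by
      have h1 : ∀ A, ((E A).card : ℝ) = ∑ x ∈ Z, if x ∈ E A then (1:ℝ) else 0 := by
        intro A
        rw [← Finset.sum_filter]
        have : Z.filter (fun x => x ∈ E A) = E A := by
          ext x; simp only [E, Finset.mem_filter]; tauto
        rw [this]; simp
      simp only [h1]
      rw [Finset.sum_comm]
      simp
    rw [this, ← nsmul_eq_mul]
    apply Finset.sum_le_card_nsmul
    intro x hx
    by_cases hc : (((P.filter (fun A => x ∈ A)).card : ℝ) ≤ P.card / 32)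
    · have : P.filter (fun A => x ∈ E A) = P.filter (fun A => x ∈ A) := by
        ext A; simp [E, hc, hx]
      rw [this]; exact hc
    · have : P.filter (fun A => x ∈ E A) = P.filter (fun A => x ∉ A) := by
        ext A; simp only [E, hc, hx, Finset.mem_filter, if_false, true_and]
      rw [this]
      exact (hs x hx).resolve_left hc
  have hinj : Set.InjOn (fun A => (A ∩ (D \ Z), E A)) (P : Set (Finset (Fin n))) := by
    intro A hA B hB hAB
    simp only [Prod.mk.injEq] at hAB
    ext x
    by_cases hxD : x ∈ D
    · by_cases hxZ : x ∈ Z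
      · have h2 : x ∈ E A ↔ x ∈ E B := by rw [hAB.2]
        simp only [E, Finset.mem_filter, hxZ, true_and] at h2
        split_ifs at h2
        · exact h2
        · tauto
      · have h2 : x ∈ A ∩ (D \ Z) ↔ x ∈ B ∩ (D \ Z) := by rw [hAB.1]
        simpa [hxD, hxZ] using h2
    · rcases hD x hxD with h | h
      · exact ⟨fun h' => absurd h' (h A hA), fun h' => absurd h' (h B hB)⟩
      · exact ⟨fun _ => h B hB, fun _ => h A hA⟩
  have hupper : ∑ A ∈ P, Real.exp (-2) ^ (E A).card ≤
      2^(D \ Z).card * (1 + Real.exp (-2))^Z.card := by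
    calc ∑ A ∈ P, Real.exp (-2) ^ (E A).card
        = ∑ q ∈ P.image (fun A => (A ∩ (D \ Z), E A)), Real.exp (-2) ^ q.2.card := by
          rw [Finset.sum_image hinj]
      _ ≤ ∑ q ∈ (D \ Z).powerset ×ˢ Z.powerset, Real.exp (-2) ^ q.2.card := by
          apply Finset.sum_le_sum_of_subset_of_nonneg
          · intro q hq
            rw [Finset.mem_image] at hq
            obtain ⟨A, _, rfl⟩ := hq
            simp only [Finset.mem_product, Finset.mem_powerset]
            exact ⟨Finset.inter_subset_right, Finset.filter_subset _ _⟩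
          · intro q _ _; positivity
      _ = _ := by
          rw [Finset.sum_product]
          have := Finset.sum_pow_mul_eq_add_pow (Real.exp (-2)) 1 Z
          simp only [one_pow, mul_one] at this
          simp only [this, Finset.sum_const, Finset.card_powerset, nsmul_eq_mul]
          push_cast
          rw [add_comm 1]
  have hlower : (P.card : ℝ) * Real.exp (-(Z.card / 16)) ≤ ∑ A ∈ P, Real.exp (-2) ^ (E A).card := by
    have h1 : ∀ A ∈ P, Real.exp (-(Z.card / 16)) * (1 - 2 * (E A).card + Z.card/16) ≤
        Real.exp (-2) ^ (E A).card := by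
      intro A _
      have h2 : Real.exp (-2) ^ (E A).card = Real.exp (-(Z.card / 16)) *
          Real.exp (-2 * (E A).card + Z.card/16) := by
        rw [← Real.exp_nat_mul, ← Real.exp_add]; congr 1; ring
      rw [h2]
      apply mul_le_mul_of_nonneg_left _ (Real.exp_pos _).le
      have := Real.add_one_le_exp (-2 * ((E A).card : ℝ) + Z.card/16)
      linarith
    refine le_trans ?_ (Finset.sum_le_sum h1)
    rw [← Finset.mul_sum, mul_comm]
    apply mul_le_mul_of_nonneg_left _ (Real.exp_pos _).le
    rw [Finset.sum_add_distrib, Finset.sum_sub_distrib, ← Finset.mul_sum]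
    simp only [Finset.sum_const, nsmul_eq_mul, mul_one]
    linarith
  have h := hlower.trans hupper
  have hexp : Real.exp (-(Z.card / 16)) * (Real.exp (1/16))^Z.card = 1 := by
    rw [← Real.exp_nat_mul, ← Real.exp_add]
    rw [Real.exp_eq_one_iff]; ring
  calc (P.card : ℝ) = (P.card : ℝ) * Real.exp (-(Z.card / 16)) * (Real.exp (1/16))^Z.card := by
        rw [mul_assoc, hexp, mul_one]
    _ ≤ 2^(D \ Z).card * (1 + Real.exp (-2))^Z.card * (Real.exp (1/16))^Z.card := by gcongr
    _ = 2^(D \ Z).card * ((1 + Real.exp (-2)) * Real.exp (1/16))^Z.card := by rw [mul_pow]; ring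
    _ ≤ _ := by
        gcongr
        exact kappa_bound

lemma build_tower (k : ℕ) (hk : 2 ≤ k) (ℓ n : ℕ) (hn : n = k * ℓ)
    (P : ℕ → Finset (Finset (Fin n)))
    (hsize : ∀ i < k, (1 - 1/(16*k)) * (2:ℝ)^ℓ ≤ (P i).card)
    (hcross : ∀ j < k, ∀ i < j,
      (∀ A ∈ P i, (((P j).filter (fun B => ¬ A ⊂ B)).card : ℝ) ≤ 2^ℓ/64) ∧
        (∀ B ∈ P j, (((P i).filter (fun A => ¬ A ⊂ B)).card : ℝ) ≤ 2^ℓ/64)) :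
    ∃ X : ℕ → Finset (Fin n), X 0 = ∅ ∧ X k = Finset.univ ∧ (∀ i, X i ⊆ X (i+1)) ∧
      ∀ i < k, ∀ A ∈ P i, X i ⊆ A ∧ A ⊆ X (i+1) := by
  classical
  have hk' : (2:ℝ) ≤ k := by exact_mod_cast hk
  have hN : (0:ℝ) < 2^ℓ := by positivity
  have hfrac : 1/(16*(k:ℝ)) ≤ 1/2 := by
    apply one_div_le_one_div_of_le <;> linarith
  have hhalf : ∀ i < k, (2:ℝ)^ℓ / 2 ≤ (P i).card := by
    intro i hi
    refine le_trans ?_ (hsize i hi)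
    nlinarith
  have hsplit : ∀ i x, (((P i).filter (fun A => x ∈ A)).card : ℝ) +
      ((P i).filter (fun A => x ∉ A)).card = (P i).card := by
    intro i x
    exact_mod_cast Finset.card_filter_add_card_filter_not (s := P i) (fun A => x ∈ A)
  have fact1 : ∀ j < k, ∀ i < j, ∀ x, (∃ A ∈ P i, x ∈ A) →
      (((P j).filter (fun B => x ∉ B)).card : ℝ) ≤ 2^ℓ/64 := by
    rintro j hj i hi x ⟨A, hA, hx⟩
    refine le_trans ?_ ((hcross j hj i hi).1 A hA)
    have : (P j).filter (fun B => x ∉ B) ⊆ (P j).filter (fun B => ¬ A ⊂ B) := by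
      intro B hB
      rw [Finset.mem_filter] at hB ⊢
      exact ⟨hB.1, fun h => hB.2 (h.1 hx)⟩
    exact_mod_cast Finset.card_le_card this
  have fact2 : ∀ j < k, ∀ i < j, ∀ x, (∃ B ∈ P j, x ∉ B) →
      (((P i).filter (fun A => x ∈ A)).card : ℝ) ≤ 2^ℓ/64 := by
    rintro j hj i hi x ⟨B, hB, hx⟩
    refine le_trans ?_ ((hcross j hj i hi).2 B hB)
    have : (P i).filter (fun A => x ∈ A) ⊆ (P i).filter (fun A => ¬ A ⊂ B) := by
      intro A hA
      rw [Finset.mem_filter] at hA ⊢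
      exact ⟨hA.1, fun h => hx (h.1 hA.2)⟩
    exact_mod_cast Finset.card_le_card this
  let D : ℕ → Finset (Fin n) := fun i => Finset.univ.filter (fun x =>
    (∃ A ∈ P i, x ∈ A) ∧ (∃ A ∈ P i, x ∉ A))
  have hDmem : ∀ i x, x ∈ D i ↔ (∃ A ∈ P i, x ∈ A) ∧ (∃ A ∈ P i, x ∉ A) := by
    intro i x; simp [D]
  let Z : ℕ → Finset (Fin n) := fun i => (D i).filter (fun x => ∃ j, j < k ∧ j ≠ i ∧ x ∈ D j)
  have hbound : ∀ i < k, ((P i).card : ℝ) ≤ 2^(D i \ Z i).card * (5/4)^(Z i).card := by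
    intro i hi
    apply skew_bound (P i) (D i) (Z i) (Finset.filter_subset _ _)
    · intro x hx
      rw [hDmem] at hx
      by_contra hcon
      push Not at hcon
      exact hx hcon
    · intro x hx
      obtain ⟨hxi, j, hj, hji, hxj⟩ := Finset.mem_filter.1 hx
      have hh := hhalf i hi
      rw [hDmem] at hxi hxj
      rcases lt_or_gt_of_ne hji with h | h
      · right
        have := fact1 i hi j h x hxj.1
        linarith
      · left
        have := fact2 j hj i h x hxj.2
        linarith
  let φ : ℕ → Fin n → ℝ := fun i x => if x ∈ D i then (if x ∈ Z i then 5/4 else 2) else 1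
  have hφ : ∀ i, ∏ x, φ i x = 2^(D i \ Z i).card * (5/4)^(Z i).card := by
    intro i
    simp only [φ]
    rw [← Finset.prod_filter]
    have h1 : Finset.univ.filter (fun x => x ∈ D i) = D i := by ext; simp
    rw [h1, Finset.prod_ite, Finset.prod_const, Finset.prod_const]
    have h2 : (D i).filter (fun x => x ∈ Z i) = Z i := by
      ext x; simp only [Z, Finset.mem_filter]; tauto
    have h3 : (D i).filter (fun x => x ∉ Z i) = D i \ Z i := by
      ext x; simp
    rw [h2, h3, mul_comm]
  let I : Fin n → Finset ℕ := fun x => (Finset.range k).filter (fun i => x ∈ D i)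
  have hImem : ∀ x i, i ∈ I x ↔ i < k ∧ x ∈ D i := by intro x i; simp [I]
  have hI2 : ∀ x, (I x).card ≤ 2 := by
    intro x
    by_contra hcon
    push Not at hcon
    have hne : (I x).Nonempty := Finset.card_pos.1 (by omega)
    set a := (I x).min' hne with ha
    set c := (I x).max' hne with hc
    have : 0 < (((I x).erase a).erase c).card := by
      have h1 := Finset.pred_card_le_card_erase (s := I x) (a := a)
      have h2 := Finset.pred_card_le_card_erase (s := (I x).erase a) (a := c)
      omega
    obtain ⟨b, hb⟩ := Finset.card_pos.1 this
    simp only [Finset.mem_erase] at hb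
    obtain ⟨hbc, hba, hbI⟩ := hb
    have h1 : a < b := lt_of_le_of_ne (Finset.min'_le _ _ hbI) (Ne.symm hba)
    have h2 : b < c := lt_of_le_of_ne (Finset.le_max' _ _ hbI) hbc
    have haI := (hImem x a).1 (Finset.min'_mem _ _)
    have hcI := (hImem x c).1 (Finset.max'_mem _ _)
    rw [hImem] at hbI
    have f1 := fact1 b hbI.1 a h1 x ((hDmem a x).1 haI.2).1
    have f2 := fact2 c hcI.1 b h2 x ((hDmem c x).1 hcI.2).2
    have := hsplit b x
    have := hhalf b hbI.1
    linarith
  have hprodx : ∀ x, ∏ i ∈ Finset.range k, φ i x = if (I x).card = 1 then 2 else (5/4)^(I x).card := by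
    intro x
    have h1 : ∏ i ∈ Finset.range k, φ i x = ∏ i ∈ I x, (if x ∈ Z i then (5/4:ℝ) else 2) := by
      simp only [φ, I]
      rw [Finset.prod_filter]
    rw [h1]
    split_ifs with hc
    · obtain ⟨a, ha⟩ := Finset.card_eq_one.1 hc
      rw [ha, Finset.prod_singleton, if_neg]
      intro hx
      obtain ⟨_, j, hj, hja, hxj⟩ := Finset.mem_filter.1 hx
      have : j ∈ I x := (hImem x j).2 ⟨hj, hxj⟩
      rw [ha, Finset.mem_singleton] at this
      exact hja this
    · rw [← Finset.prod_const]
      apply Finset.prod_congr rfl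
      intro i hi
      rw [if_pos]
      have hi' := (hImem x i).1 hi
      have : 1 < (I x).card := by
        have : 0 < (I x).card := Finset.card_pos.2 ⟨i, hi⟩
        omega
      obtain ⟨j, hj, hji⟩ := Finset.exists_mem_ne this i
      have hj' := (hImem x j).1 hj
      exact Finset.mem_filter.2 ⟨hi'.2, j, hj'.1, hji, hj'.2⟩
  have hone : ∀ x, (I x).card = 1 := by
    intro x
    by_contra hx
    have hpx : ∀ y, 0 ≤ ∏ i ∈ Finset.range k, φ i y ∧ ∏ i ∈ Finset.range k, φ i y ≤ 2 := by
      intro y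
      rw [hprodx]
      have := hI2 y
      interval_cases h : (I y).card <;> norm_num
    have hpx' : ∏ i ∈ Finset.range k, φ i x ≤ 25/16 := by
      rw [hprodx, if_neg hx]
      have := hI2 x
      interval_cases h : (I x).card <;> norm_num
    have hup : ∏ i ∈ Finset.range k, ((P i).card : ℝ) ≤ 25/16 * 2^(n-1) := by
      calc ∏ i ∈ Finset.range k, ((P i).card : ℝ) ≤ ∏ i ∈ Finset.range k, ∏ x, φ i x := by
            apply Finset.prod_le_prod
            · intro i _; positivity
            · intro i hi; rw [hφ]; exact hbound i (Finset.mem_range.1 hi)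
        _ = ∏ y, ∏ i ∈ Finset.range k, φ i y := Finset.prod_comm
        _ = (∏ i ∈ Finset.range k, φ i x) * ∏ y ∈ Finset.univ.erase x, ∏ i ∈ Finset.range k, φ i y :=
            (Finset.mul_prod_erase _ _ (Finset.mem_univ x)).symm
        _ ≤ 25/16 * ∏ y ∈ Finset.univ.erase x, (2:ℝ) := by
            apply mul_le_mul hpx'
            · exact Finset.prod_le_prod (fun y _ => (hpx y).1) (fun y _ => (hpx y).2)
            · exact Finset.prod_nonneg fun y _ => (hpx y).1
            · norm_num
        _ = 25/16 * 2^(n-1) := by simp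
    have hlow : (15/16 : ℝ) * 2^n ≤ ∏ i ∈ Finset.range k, ((P i).card : ℝ) := by
      have h1 : ∏ i ∈ Finset.range k, ((1 - 1/(16*(k:ℝ))) * (2:ℝ)^ℓ) ≤
          ∏ i ∈ Finset.range k, ((P i).card : ℝ) := by
        apply Finset.prod_le_prod
        · intro i _
          apply mul_nonneg _ hN.le
          linarith
        · intro i hi; exact hsize i (Finset.mem_range.1 hi)
      refine le_trans ?_ h1
      rw [Finset.prod_const, Finset.card_range, mul_pow, ← pow_mul, mul_comm ℓ k, ← hn]
      apply mul_le_mul_of_nonneg_right _ (by positivity)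
      have := one_add_mul_le_pow (a := -(1/(16*(k:ℝ)))) (by linarith) k
      have h2 : 1 + (k:ℝ) * (-(1/(16*(k:ℝ)))) = 15/16 := by field_simp; norm_num
      rw [h2] at this
      rw [sub_eq_add_neg]
      exact this
    have hnpos : 0 < n := Fin.pos x
    have h2n : (2:ℝ)^n = 2 * 2^(n-1) := by rw [← pow_succ']; congr 1; omega
    have : (0:ℝ) < 2^(n-1) := by positivity
    rw [h2n] at hlow
    linarith
  have hι : ∀ x, ∃ a, I x = {a} := fun x => Finset.card_eq_one.1 (hone x)
  choose ι hι using hι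
  have hιk : ∀ x, ι x < k ∧ x ∈ D (ι x) := by
    intro x
    rw [← hImem, hι]; simp
  have hιu : ∀ x i, i < k → x ∈ D i → i = ι x := by
    intro x i hi hx
    have := (hImem x i).2 ⟨hi, hx⟩
    rw [hι] at this
    simpa using this
  refine ⟨fun i => Finset.univ.filter (fun x => ι x < i), ?_, ?_, ?_, ?_⟩
  · simp
  · ext x; simp [(hιk x).1]
  · intro i x; simp only [Finset.mem_filter, Finset.mem_univ, true_and]; omega
  · intro i hi A hA
    constructor
    · intro x hx
      simp only [Finset.mem_filter, Finset.mem_univ, true_and] at hx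
      by_contra hxA
      have f1 := fact1 i hi (ι x) hx x ((hDmem _ x).1 (hιk x).2).1
      have f2 := hsplit i x
      have f3 := hhalf i hi
      have f4 : (0:ℝ) < ((P i).filter (fun A => x ∈ A)).card := by linarith
      obtain ⟨B, hB⟩ := Finset.card_pos.1 (Nat.cast_pos.1 f4)
      rw [Finset.mem_filter] at hB
      have := hιu x i hi ((hDmem i x).2 ⟨⟨B, hB⟩, ⟨A, hA, hxA⟩⟩)
      omega
    · intro x hxA
      simp only [Finset.mem_filter, Finset.mem_univ, true_and]
      by_contra hx
      have f1 := fact2 (ι x) (hιk x).1 i (by omega) x ((hDmem _ x).1 (hιk x).2).2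
      have f2 := hsplit i x
      have f3 := hhalf i hi
      have f4 : (0:ℝ) < ((P i).filter (fun A => x ∉ A)).card := by linarith
      obtain ⟨B, hB⟩ := Finset.card_pos.1 (Nat.cast_pos.1 f4)
      rw [Finset.mem_filter] at hB
      have := hιu x i hi ((hDmem i x).2 ⟨⟨A, hA, hxA⟩, ⟨B, hB⟩⟩)
      omega

def IsTw {n : ℕ} (k ℓ : ℕ) (X : ℕ → Finset (Fin n)) : Prop :=
  X 0 = ∅ ∧ X k = Finset.univ ∧ (∀ i ≤ k, (X i).card = i * ℓ) ∧
    (∀ j ≤ k, ∀ i ≤ j, X i ⊆ X j)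

def TT {n : ℕ} (k : ℕ) (X : ℕ → Finset (Fin n)) : Finset (Finset (Fin n)) :=
  Finset.univ.filter (fun F => ∃ i < k, X i ⊆ F ∧ F ⊆ X (i+1))

def cmpSet {n : ℕ} (A : Finset (Fin n)) (𝒢 : Finset (Finset (Fin n))) : Finset (Finset (Fin n)) :=
  𝒢.filter (fun C => A ⊂ C ∨ C ⊂ A)

lemma mem_TT {n : ℕ} {k : ℕ} {X : ℕ → Finset (Fin n)} {F : Finset (Fin n)} :
    F ∈ TT k X ↔ ∃ i < k, X i ⊆ F ∧ F ⊆ X (i+1) := by simp [TT]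

lemma cube_card {n k ℓ : ℕ} {X : ℕ → Finset (Fin n)} (h : IsTw k ℓ X) (i : ℕ) (hi : i < k) :
    (Finset.Icc (X i) (X (i+1))).card = 2^ℓ := by
  rw [Finset.card_Icc_finset (h.2.2.2 _ (by omega) _ (by omega)), h.2.2.1 _ (by omega),
    h.2.2.1 _ (by omega)]
  congr 1
  rw [Nat.add_mul]; omega

lemma R_card {n k ℓ : ℕ} {X : ℕ → Finset (Fin n)} (h : IsTw k ℓ X) (i : ℕ) (hi : i < k) :
    ((Finset.Icc (X i) (X (i+1))).erase (X i)).card = 2^ℓ - 1 := by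
  rw [Finset.card_erase_of_mem, cube_card h i hi]
  rw [Finset.mem_Icc]
  exact ⟨le_rfl, h.2.2.2 _ (by omega) _ (by omega)⟩

lemma R_lt {n k ℓ : ℕ} {X : ℕ → Finset (Fin n)} (h : IsTw k ℓ X) {i j : ℕ} (hij : i < j)
    (hj : j < k) {A B : Finset (Fin n)} (hA : A ∈ (Finset.Icc (X i) (X (i+1))).erase (X i))
    (hB : B ∈ (Finset.Icc (X j) (X (j+1))).erase (X j)) : A ⊂ B := by
  rw [Finset.mem_erase, Finset.mem_Icc] at hA hB
  have h1 : A ⊆ X j := subset_trans hA.2.2 (h.2.2.2 _ (by omega) _ (by omega))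
  have h2 : X j ⊂ B := lt_of_le_of_ne hB.2.1 (Ne.symm hB.1)
  exact lt_of_le_of_lt h1 h2

lemma R_disj {n k ℓ : ℕ} {X : ℕ → Finset (Fin n)} (h : IsTw k ℓ X) :
    Set.PairwiseDisjoint (↑(Finset.range k) : Set ℕ)
      (fun i => (Finset.Icc (X i) (X (i+1))).erase (X i)) := by
  intro i hi j hj hij
  simp only [Finset.coe_range, Set.mem_Iio] at hi hj
  rw [Function.onFun, Finset.disjoint_left]
  intro A hA hB
  rcases lt_or_gt_of_ne hij with h' | h'
  · exact (R_lt h h' hj hA hB).ne rfl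
  · exact (R_lt h h' hi hB hA).ne rfl

lemma TT_eq {n k ℓ : ℕ} {X : ℕ → Finset (Fin n)} (h : IsTw k ℓ X) (hk : 0 < k) :
    TT k X = insert ∅ ((Finset.range k).biUnion
      (fun i => (Finset.Icc (X i) (X (i+1))).erase (X i))) := by
  ext F
  rw [mem_TT, Finset.mem_insert, Finset.mem_biUnion]
  constructor
  · intro hF
    let i := Nat.find hF
    obtain ⟨hi, h1, h2⟩ := Nat.find_spec hF
    by_cases hFi : F = X i
    · rcases Nat.eq_zero_or_pos i with h0 | h0
      · left; rw [hFi, h0]; exact h.1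
      · exfalso
        apply Nat.find_min hF (m := i - 1) (show i - 1 < i by omega)
        have h3 : i - 1 + 1 = i := by omega
        have hi' : i < k := hi
        refine ⟨by omega, ?_, ?_⟩
        · rw [hFi]; exact h.2.2.2 _ (by omega) _ (by omega)
        · rw [h3, hFi]
    · right
      exact ⟨i, Finset.mem_range.2 hi, Finset.mem_erase.2 ⟨hFi, Finset.mem_Icc.2 ⟨h1, h2⟩⟩⟩
  · rintro (rfl | ⟨i, hi, hF⟩)
    · exact ⟨0, hk, by rw [h.1], Finset.empty_subset _⟩
    · rw [Finset.mem_erase, Finset.mem_Icc] at hF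
      exact ⟨i, Finset.mem_range.1 hi, hF.2.1, hF.2.2⟩

lemma TT_card {n k ℓ : ℕ} {X : ℕ → Finset (Fin n)} (h : IsTw k ℓ X) (hk : 0 < k) :
    (TT k X).card = k * (2^ℓ - 1) + 1 := by
  rw [TT_eq h hk, Finset.card_insert_of_notMem, Finset.card_biUnion (R_disj h)]
  · rw [Finset.sum_congr rfl (fun i hi => R_card h i (Finset.mem_range.1 hi))]
    simp
  · rw [Finset.mem_biUnion]
    rintro ⟨i, hi, hF⟩
    rw [Finset.mem_erase, Finset.mem_Icc] at hF
    exact hF.1 (Finset.subset_empty.1 hF.2.1).symm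

lemma TT_comp {n k ℓ : ℕ} {X : ℕ → Finset (Fin n)} (h : IsTw k ℓ X) (hk : 0 < k) :
    (k : ℝ) * (k-1) / 2 * (2^ℓ-1)^2 ≤ compCount (TT k X) := by
  set R : ℕ → Finset (Finset (Fin n)) := fun i => (Finset.Icc (X i) (X (i+1))).erase (X i) with hR
  have hRc : ∀ i < k, ((R i).card : ℝ) = 2^ℓ - 1 := by
    intro i hi
    rw [hR]; simp only
    rw [R_card h i hi, Nat.cast_sub Nat.one_le_two_pow]; push_cast; rfl
  have hsub : (Finset.range k).biUnion R ⊆ TT k X := by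
    rw [TT_eq h hk]; exact Finset.subset_insert _ _
  have h1 : (compCount (TT k X) : ℝ) = ∑ A ∈ TT k X, ∑ B ∈ TT k X, if A ⊂ B then (1:ℝ) else 0 := by
    rw [compCount_eq]; push_cast; simp
  have hnn : ∀ A B : Finset (Fin n), (0:ℝ) ≤ if A ⊂ B then (1:ℝ) else 0 := by
    intro A B; split_ifs <;> norm_num
  have h2 : ∑ A ∈ (Finset.range k).biUnion R, ∑ B ∈ (Finset.range k).biUnion R,
      (if A ⊂ B then (1:ℝ) else 0) ≤ compCount (TT k X) := by
    rw [h1]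
    refine (Finset.sum_le_sum_of_subset_of_nonneg hsub
      (fun A _ _ => Finset.sum_nonneg fun B _ => hnn A B)).trans ?_
    exact Finset.sum_le_sum fun A _ => Finset.sum_le_sum_of_subset_of_nonneg hsub
      (fun B _ _ => hnn A B)
  refine le_trans ?_ h2
  rw [Finset.sum_comm, Finset.sum_biUnion (R_disj h)]
  have h3 := sum_lt_pairs (fun _ => (2:ℝ)^ℓ - 1) k
  have h4 : (k : ℝ) * (k-1) / 2 * (2^ℓ-1)^2 =
      ∑ j ∈ Finset.range k, ∑ i ∈ Finset.range j, ((2:ℝ)^ℓ - 1) * (2^ℓ - 1) := by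
    rw [h3]; simp only [Finset.sum_const, Finset.card_range, nsmul_eq_mul]; ring
  rw [h4]
  apply Finset.sum_le_sum
  intro j hj
  rw [Finset.mem_range] at hj
  have h5 : ∀ B ∈ R j, ∑ i ∈ Finset.range j, ((2:ℝ)^ℓ - 1) ≤
      ∑ A ∈ (Finset.range k).biUnion R, if A ⊂ B then (1:ℝ) else 0 := by
    intro B hB
    rw [Finset.sum_biUnion (R_disj h)]
    have : Finset.range j ⊆ Finset.range k := Finset.range_subset_range.2 hj.le
    refine le_trans ?_ (Finset.sum_le_sum_of_subset_of_nonneg this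
      (fun i _ _ => Finset.sum_nonneg fun A _ => hnn A B))
    apply Finset.sum_le_sum
    intro i hi
    rw [Finset.mem_range] at hi
    rw [Finset.sum_congr rfl (fun A hA => if_pos (R_lt h hi hj hA hB))]
    rw [Finset.sum_const, nsmul_eq_mul, mul_one]
    exact (hRc i (by omega)).ge
  refine le_trans (le_of_eq ?_) (Finset.sum_le_sum h5)
  rw [Finset.sum_const (s := R j), nsmul_eq_mul, hRc j hj, Finset.mul_sum]

lemma std_tower (k ℓ n : ℕ) (hn : n = k * ℓ) : ∃ X : ℕ → Finset (Fin n), IsTw k ℓ X := by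
  refine ⟨fun i => Finset.univ.filter (fun x : Fin n => x.val < i * ℓ), ?_, ?_, ?_, ?_⟩
  · simp
  · ext x; simp [← hn, x.2]
  · intro i hi
    rw [Fin.card_filter_val_lt]
    rw [hn]; exact min_eq_right (Nat.mul_le_mul_right _ hi)
  · intro j _ i hij x
    simp only [Finset.mem_filter, Finset.mem_univ, true_and]
    intro hx
    exact lt_of_lt_of_le hx (Nat.mul_le_mul_right _ hij)

lemma cmp_mem_lower {n k ℓ : ℕ} {X : ℕ → Finset (Fin n)} (h : IsTw k ℓ X) (hk : 0 < k)
    {A : Finset (Fin n)} (hA : A ∈ TT k X) :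
    k * (2^ℓ - 1) + 2^(ℓ/2) ≤ (cmpSet A (TT k X)).card + 2^ℓ := by
  obtain ⟨i, hi, h1, h2⟩ := mem_TT.1 hA
  set Q := Finset.Icc (X i) (X (i+1)) with hQ
  have hQT : Q ⊆ TT k X := fun C hC => mem_TT.2 ⟨i, hi, (Finset.mem_Icc.1 hC).1, (Finset.mem_Icc.1 hC).2⟩
  have hQc : Q.card = 2^ℓ := cube_card h i hi
  have hAQ : A ∈ Q := Finset.mem_Icc.2 ⟨h1, h2⟩
  have hout : TT k X \ Q ⊆ cmpSet A (TT k X) := by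
    intro C hC
    rw [Finset.mem_sdiff] at hC
    refine Finset.mem_filter.2 ⟨hC.1, ?_⟩
    obtain ⟨j, hj, h3, h4⟩ := mem_TT.1 hC.1
    have hne : A ≠ C := fun hAC => hC.2 (hAC ▸ hAQ)
    rcases lt_trichotomy i j with hij | hij | hij
    · left
      refine lt_of_le_of_ne ?_ hne
      exact subset_trans h2 (subset_trans (h.2.2.2 _ (by omega) _ (by omega)) h3)
    · subst hij; exact absurd (Finset.mem_Icc.2 ⟨h3, h4⟩) hC.2
    · right
      refine lt_of_le_of_ne ?_ hne.symm
      exact subset_trans h4 (subset_trans (h.2.2.2 _ (by omega) _ (by omega)) h1)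
  have hW : ∃ W ⊆ Q, W ⊆ cmpSet A (TT k X) ∧ 2^(ℓ/2) ≤ W.card + 1 := by
    have c1 := Finset.card_le_card h1
    have c2 := Finset.card_le_card h2
    have c3 : (X (i+1)).card = (X i).card + ℓ := by
      rw [h.2.2.1 _ (by omega), h.2.2.1 _ (by omega)]; ring
    by_cases hd : ℓ/2 ≤ A.card - (X i).card
    · refine ⟨(Finset.Icc (X i) A).erase A, ?_, ?_, ?_⟩
      · intro C hC
        rw [Finset.mem_erase, Finset.mem_Icc] at hC
        exact Finset.mem_Icc.2 ⟨hC.2.1, subset_trans hC.2.2 h2⟩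
      · intro C hC
        rw [Finset.mem_erase, Finset.mem_Icc] at hC
        exact Finset.mem_filter.2 ⟨mem_TT.2 ⟨i, hi, hC.2.1, subset_trans hC.2.2 h2⟩,
          Or.inr (lt_of_le_of_ne hC.2.2 hC.1)⟩
      · rw [Finset.card_erase_of_mem (Finset.mem_Icc.2 ⟨h1, le_rfl⟩), Finset.card_Icc_finset h1]
        have := Nat.pow_le_pow_right (n := 2) (by norm_num) hd
        have : 1 ≤ 2^(A.card - (X i).card) := Nat.one_le_two_pow
        omega
    · have hd' : ℓ/2 ≤ (X (i+1)).card - A.card := by omega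
      refine ⟨(Finset.Icc A (X (i+1))).erase A, ?_, ?_, ?_⟩
      · intro C hC
        rw [Finset.mem_erase, Finset.mem_Icc] at hC
        exact Finset.mem_Icc.2 ⟨subset_trans h1 hC.2.1, hC.2.2⟩
      · intro C hC
        rw [Finset.mem_erase, Finset.mem_Icc] at hC
        exact Finset.mem_filter.2 ⟨mem_TT.2 ⟨i, hi, subset_trans h1 hC.2.1, hC.2.2⟩,
          Or.inl (lt_of_le_of_ne hC.2.1 (Ne.symm hC.1))⟩
      · rw [Finset.card_erase_of_mem (Finset.mem_Icc.2 ⟨le_rfl, h2⟩), Finset.card_Icc_finset h2]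
        have := Nat.pow_le_pow_right (n := 2) (by norm_num) hd'
        have : 1 ≤ 2^((X (i+1)).card - A.card) := Nat.one_le_two_pow
        omega
  obtain ⟨W, hWQ, hWc, hW2⟩ := hW
  have hdisj : Disjoint (TT k X \ Q) W :=
    Finset.disjoint_left.2 fun C hC hCW => (Finset.mem_sdiff.1 hC).2 (hWQ hCW)
  have h5 := Finset.card_le_card (Finset.union_subset hout hWc)
  rw [Finset.card_union_of_disjoint hdisj] at h5
  have h6 := Finset.card_sdiff_add_card_eq_card hQT
  rw [TT_card h hk, hQc] at h6
  omega

lemma sum_defect (c : ℕ → ℝ) (N : ℝ) (k : ℕ) (hc : ∀ i < k, c i ≤ N) (S : Finset ℕ)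
    (hS : S ⊆ Finset.range k) :
    ∑ i ∈ Finset.range k, c i ≤ k * N - ∑ i ∈ S, (N - c i) := by
  have h1 := Finset.sum_le_sum_of_subset_of_nonneg (f := fun i => N - c i) hS
    (fun i hi _ => sub_nonneg.2 (hc i (Finset.mem_range.1 hi)))
  have h2 : ∑ i ∈ Finset.range k, (N - c i) = k * N - ∑ i ∈ Finset.range k, c i := by
    rw [Finset.sum_sub_distrib]; simp
  linarith

lemma cmp_not_mem_upper {n k ℓ : ℕ} {X : ℕ → Finset (Fin n)} (h : IsTw k ℓ X) (hk : 2 ≤ k)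
    (hℓ : 2 ≤ ℓ) {F : Finset (Fin n)} (hF : F ∉ TT k X) :
    ((cmpSet F (TT k X)).card : ℝ) ≤ k * 2^ℓ - 2^ℓ ∧
    ((¬ ∃ i < k, ∃ x y, F = insert y ((X i).erase x)) →
      ((cmpSet F (TT k X)).card : ℝ) ≤ k * 2^ℓ - 2^ℓ - 2^ℓ/4) := by
  -- locate a
  have hmono := h.2.2.2
  have hTk : Finset.univ ∈ TT k X := mem_TT.2 ⟨k-1, by omega, Finset.subset_univ _, by
    have : k - 1 + 1 = k := by omega
    rw [this, h.2.1]⟩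
  have hT0 : ∅ ∈ TT k X := mem_TT.2 ⟨0, by omega, by rw [h.1], Finset.empty_subset _⟩
  have ha : ∃ a < k, X a ⊆ F ∧ ¬ X (a+1) ⊆ F := by
    by_contra hcon
    push Not at hcon
    have : ∀ a ≤ k, X a ⊆ F := by
      intro a
      induction a with
      | zero => intro _; rw [h.1]; exact Finset.empty_subset _
      | succ a ih => intro ha; exact hcon a (by omega) (ih (by omega))
    have := this k le_rfl
    rw [h.2.1, Finset.univ_subset_iff] at this
    exact hF (this ▸ hTk)
  have hb : ∃ b < k, F ⊆ X (b+1) ∧ ¬ F ⊆ X b := by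
    by_contra hcon
    push Not at hcon
    have : ∀ c ≤ k, F ⊆ X (k - c) := by
      intro c
      induction c with
      | zero => intro _; rw [Nat.sub_zero, h.2.1]; exact Finset.subset_univ _
      | succ c ih =>
        intro hc
        have h1 : k - (c+1) + 1 = k - c := by omega
        exact hcon (k-(c+1)) (by omega) (by rw [h1]; exact ih (by omega))
    have := this k le_rfl
    rw [Nat.sub_self, h.1, Finset.subset_empty] at this
    exact hF (this ▸ hT0)
  obtain ⟨a, hak, ha1, ha2⟩ := ha
  obtain ⟨b, hbk, hb1, hb2⟩ := hb
  have hab : a < b := by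
    rcases lt_trichotomy a b with h' | h' | h'
    · exact h'
    · subst h'; exact absurd (mem_TT.2 ⟨a, hak, ha1, hb1⟩) hF
    · exact absurd (mem_TT.2 ⟨a, hak, ha1, subset_trans hb1
        (hmono _ (by omega) _ (by omega))⟩) hF
  set c : ℕ → ℝ := fun i => ((cmpSet F (Finset.Icc (X i) (X (i+1)))).card : ℝ) with hc
  have hcN : ∀ i < k, c i ≤ 2^ℓ := by
    intro i hi
    simp only [hc]
    have := Finset.card_filter_le (Finset.Icc (X i) (X (i+1))) (fun C => F ⊂ C ∨ C ⊂ F)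
    rw [cube_card h i hi] at this
    exact_mod_cast this
  have htot : ((cmpSet F (TT k X)).card : ℝ) ≤ ∑ i ∈ Finset.range k, c i := by
    have hs : cmpSet F (TT k X) ⊆ (Finset.range k).biUnion
        (fun i => cmpSet F (Finset.Icc (X i) (X (i+1)))) := by
      intro C hC
      obtain ⟨hC1, hC2⟩ := Finset.mem_filter.1 hC
      obtain ⟨i, hi, h3, h4⟩ := mem_TT.1 hC1
      exact Finset.mem_biUnion.2 ⟨i, Finset.mem_range.2 hi,
        Finset.mem_filter.2 ⟨Finset.mem_Icc.2 ⟨h3, h4⟩, hC2⟩⟩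
    have := (Finset.card_le_card hs).trans Finset.card_biUnion_le
    simp only [hc]
    exact_mod_cast this
  -- bound for a
  have hcard : ∀ i < k, (X (i+1)).card = (X i).card + ℓ := by
    intro i hi
    rw [h.2.2.1 _ (by omega), h.2.2.1 _ (by omega)]; ring
  have hca : ∀ d ≤ (X (a+1) \ F).card, c a ≤ 2^(ℓ - d) := by
    intro d hd
    have hs : cmpSet F (Finset.Icc (X a) (X (a+1))) ⊆ Finset.Icc (X a) (F ∩ X (a+1)) := by
      intro C hC
      obtain ⟨hC1, hC2⟩ := Finset.mem_filter.1 hC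
      rw [Finset.mem_Icc] at hC1 ⊢
      rcases hC2 with hC2 | hC2
      · exfalso
        exact hb2 (subset_trans hC2.1 (subset_trans hC1.2 (hmono _ (by omega) _ (by omega))))
      · exact ⟨hC1.1, Finset.subset_inter hC2.1 hC1.2⟩
    have h1 := Finset.card_le_card hs
    have hsub : X a ⊆ F ∩ X (a+1) := Finset.subset_inter ha1 (hmono _ (by omega) _ (by omega))
    rw [Finset.card_Icc_finset hsub] at h1
    have h2 : (X (a+1) \ F).card + (F ∩ X (a+1)).card = (X (a+1)).card := by
      rw [Finset.inter_comm]; exact Finset.card_sdiff_add_card_inter _ _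
    have h3 := hcard a hak
    have h4 := h1.trans (Nat.pow_le_pow_right (n := 2) (j := ℓ - d) (by norm_num) (by omega))
    simp only [hc]
    exact_mod_cast h4
  have hcb : ∀ d ≤ (F \ X b).card, c b ≤ 2^(ℓ - d) := by
    intro d hd
    have hs : cmpSet F (Finset.Icc (X b) (X (b+1))) ⊆ Finset.Icc (X b ∪ F) (X (b+1)) := by
      intro C hC
      obtain ⟨hC1, hC2⟩ := Finset.mem_filter.1 hC
      rw [Finset.mem_Icc] at hC1 ⊢
      rcases hC2 with hC2 | hC2
      · exact ⟨Finset.union_subset hC1.1 hC2.1, hC1.2⟩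
      · exfalso
        exact ha2 (subset_trans (hmono _ (by omega) _ (by omega)) (subset_trans hC1.1 hC2.1))
    have h1 := Finset.card_le_card hs
    have hsub : X b ∪ F ⊆ X (b+1) := Finset.union_subset (hmono _ (by omega) _ (by omega)) hb1
    rw [Finset.card_Icc_finset hsub] at h1
    have h2 : (F \ X b).card + (X b).card = (X b ∪ F).card := by
      rw [Finset.union_comm]; exact Finset.card_sdiff_add_card _ _
    have h3 := hcard b hbk
    have h4 := h1.trans (Nat.pow_le_pow_right (n := 2) (j := ℓ - d) (by norm_num) (by omega))
    simp only [hc]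
    exact_mod_cast h4
  have hp1 : (2:ℝ)^ℓ = 2 * 2^(ℓ-1) := by rw [← pow_succ']; congr 1; omega
  have hp2 : (2:ℝ)^ℓ = 4 * 2^(ℓ-2) := by
    have : (4:ℝ) = 2^2 := by norm_num
    rw [this, ← pow_add]; congr 1; omega
  have hA1 : 1 ≤ (X (a+1) \ F).card := by
    rw [Nat.one_le_iff_ne_zero, Ne, Finset.card_eq_zero, Finset.sdiff_eq_empty_iff_subset]; exact ha2
  have hB1 : 1 ≤ (F \ X b).card := by
    rw [Nat.one_le_iff_ne_zero, Ne, Finset.card_eq_zero, Finset.sdiff_eq_empty_iff_subset]; exact hb2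
  have hca1 := hca 1 hA1
  have hcb1 := hcb 1 hB1
  have hpos : (0:ℝ) < 2^ℓ := by positivity
  have hsum2 := sum_defect c (2^ℓ) k hcN {a, b} (by
    intro i hi; simp only [Finset.mem_insert, Finset.mem_singleton] at hi
    rw [Finset.mem_range]; omega)
  rw [Finset.sum_pair hab.ne] at hsum2
  refine ⟨by linarith, fun hnear => ?_⟩
  by_cases hab2 : b = a + 1
  · by_cases hA2 : 2 ≤ (X (a+1) \ F).card
    · have := hca 2 hA2
      linarith
    · by_cases hB2 : 2 ≤ (F \ X b).card
      · have := hcb 2 hB2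
        linarith
      · exfalso
        obtain ⟨x, hx⟩ := Finset.card_eq_one.1 (show (X (a+1) \ F).card = 1 by omega)
        obtain ⟨y, hy⟩ := Finset.card_eq_one.1 (show (F \ X b).card = 1 by omega)
        apply hnear
        refine ⟨b, hbk, x, y, ?_⟩
        rw [← hab2] at hx
        ext z
        have hx' : z ∈ X b \ F ↔ z = x := by rw [hx]; simp
        have hy' : z ∈ F \ X b ↔ z = y := by rw [hy]; simp
        rw [Finset.mem_sdiff] at hx' hy'
        rw [Finset.mem_insert, Finset.mem_erase]
        tauto
  · have hz : c (a+1) = 0 := by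
      simp only [hc]
      rw [Nat.cast_eq_zero, Finset.card_eq_zero, cmpSet, Finset.filter_eq_empty_iff]
      intro C hC hC2
      rw [Finset.mem_Icc] at hC
      rcases hC2 with hC2 | hC2
      · exact hb2 (subset_trans hC2.1 (subset_trans hC.2 (hmono _ (by omega) _ (by omega))))
      · exact ha2 (subset_trans hC.1 hC2.1)
    have hsum3 := sum_defect c (2^ℓ) k hcN {a, b, a+1} (by
      intro i hi; simp only [Finset.mem_insert, Finset.mem_singleton] at hi
      rw [Finset.mem_range]; omega)
    rw [Finset.sum_insert (by simp; omega), Finset.sum_pair hab2, hz] at hsum3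
    linarith

lemma compCount_insert {n : ℕ} (𝒢 : Finset (Finset (Fin n))) (A : Finset (Fin n)) (hA : A ∉ 𝒢) :
    compCount (insert A 𝒢) = compCount 𝒢 + (cmpSet A 𝒢).card := by
  rw [compCount_eq, compCount_eq, Finset.sum_insert hA]
  have h1 : ∀ B, ((insert A 𝒢).filter (fun C => B ⊂ C)).card =
      (𝒢.filter (fun C => B ⊂ C)).card + if B ⊂ A then 1 else 0 := by
    intro B
    rw [Finset.filter_insert]
    split_ifs
    · rw [Finset.card_insert_of_notMem (by simp [hA])]
    · simp
  simp only [h1]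
  rw [Finset.sum_add_distrib, if_neg (by simp), ← Finset.card_filter]
  have h2 : (cmpSet A 𝒢).card = (𝒢.filter (fun C => A ⊂ C)).card + (𝒢.filter (fun C => C ⊂ A)).card := by
    rw [cmpSet, Finset.filter_or, Finset.card_union_of_disjoint]
    rw [Finset.disjoint_left]
    intro C h3 h4
    exact lt_asymm (Finset.mem_filter.1 h3).2 (Finset.mem_filter.1 h4).2
  rw [h2]
  omega

lemma near_card {n k : ℕ} (X : ℕ → Finset (Fin n)) (S : Finset (Finset (Fin n)))
    (hS : ∀ F ∈ S, ∃ i < k, ∃ x y, F = insert y ((X i).erase x)) : S.card ≤ k * (n * n) := by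
  have : S ⊆ ((Finset.range k) ×ˢ ((Finset.univ : Finset (Fin n)) ×ˢ (Finset.univ : Finset (Fin n)))).image
      (fun q => insert q.2.2 ((X q.1).erase q.2.1)) := by
    intro F hF
    obtain ⟨i, hi, x, y, rfl⟩ := hS F hF
    rw [Finset.mem_image]
    exact ⟨(i, x, y), by simp [hi], rfl⟩
  refine (Finset.card_le_card this).trans (Finset.card_image_le.trans ?_)
  simp

lemma growth (k : ℕ) : ∃ L : ℕ, ∀ ℓ ≥ L, 2 * (k * ((k*ℓ) * (k*ℓ))) + k < 2^(ℓ/2) := by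
  have h := tendsto_pow_const_div_const_pow_of_one_lt 2 (one_lt_two : (1:ℝ) < 2)
  have h2 := h.eventually (gt_mem_nhds (show (0:ℝ) < 1/(19 * (k+1)^3) by positivity))
  obtain ⟨M, hM⟩ := Filter.eventually_atTop.1 h2
  refine ⟨2 * (M + 1), fun ℓ hℓ => ?_⟩
  set t := ℓ/2 with ht
  have ht1 : M + 1 ≤ t := by omega
  have hℓt : ℓ ≤ 3 * t := by omega
  have := hM t (by omega)
  rw [div_lt_div_iff₀ (by positivity) (by positivity)] at this
  have h3 : t^2 * (19 * (k+1)^3) < 1 * 2^t := by exact_mod_cast this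
  have h4 : (k*ℓ) * (k*ℓ) ≤ (k*(3*t)) * (k*(3*t)) := by gcongr
  have h5 : 2 * (k * ((k*ℓ) * (k*ℓ))) + k ≤ t^2 * (19 * (k+1)^3) := by
    calc 2 * (k * ((k*ℓ) * (k*ℓ))) + k ≤ 2 * (k * ((k*(3*t)) * (k*(3*t)))) + k := by gcongr
      _ = 18 * t^2 * k^3 + k := by ring
      _ ≤ 18 * t^2 * (k+1)^3 + 1 * (k+1)^3 := by
          have : k ≤ (k+1)^3 := (Nat.le_succ k).trans (Nat.le_self_pow (by norm_num) _)
          have : k^3 ≤ (k+1)^3 := Nat.pow_le_pow_left (Nat.le_succ k) 3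
          gcongr
          omega
      _ ≤ 18 * t^2 * (k+1)^3 + t^2 * (k+1)^3 := by
          have : 1 ≤ t^2 := Nat.one_le_pow _ _ (by omega)
          gcongr
      _ = _ := by ring
  omega

lemma final_IsTw {n k ℓ : ℕ} (hk : 2 ≤ k) (hn : n = k * ℓ) (P : ℕ → Finset (Finset (Fin n)))
    (hsize : ∀ i < k, (1 - 1/(16*k)) * (2:ℝ)^ℓ ≤ (P i).card)
    (X : ℕ → Finset (Fin n)) (h0 : X 0 = ∅) (h1 : X k = Finset.univ)
    (hX : ∀ i, X i ⊆ X (i+1))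
    (hP : ∀ i < k, ∀ A ∈ P i, X i ⊆ A ∧ A ⊆ X (i+1)) : IsTw k ℓ X := by
  have hk' : (2:ℝ) ≤ k := by exact_mod_cast hk
  have hN : (0:ℝ) < 2^ℓ := by positivity
  have hfrac : 1/(16*(k:ℝ)) < 1/2 := by
    apply one_div_lt_one_div_of_lt <;> linarith
  have hhalf : ∀ i < k, (2:ℝ)^ℓ < 2 * (P i).card := by
    intro i hi
    have := hsize i hi
    nlinarith
  have hmono : Monotone X := monotone_nat_of_le_succ hX
  have hstep : ∀ i < k, (X i).card + ℓ ≤ (X (i+1)).card := by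
    intro i hi
    have hs : P i ⊆ Finset.Icc (X i) (X (i+1)) := fun A hA => Finset.mem_Icc.2 (hP i hi A hA)
    have h2 := Finset.card_le_card hs
    rw [Finset.card_Icc_finset (hX i)] at h2
    have h3 : 2^ℓ < 2 * (P i).card := by exact_mod_cast hhalf i hi
    have h4 : 2^ℓ < 2^((X (i+1)).card - (X i).card + 1) := by
      rw [pow_succ]; omega
    have h5 := (Nat.pow_lt_pow_iff_right (by norm_num : 1 < 2)).1 h4
    have h6 := Finset.card_le_card (hX i)
    omega
  have hlow : ∀ i ≤ k, i * ℓ ≤ (X i).card := by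
    intro i
    induction i with
    | zero => simp
    | succ i ih =>
      intro hi
      have := ih (by omega)
      have := hstep i (by omega)
      rw [Nat.add_mul]; omega
  have hup : ∀ d ≤ k, (X (k - d)).card + d * ℓ ≤ n := by
    intro d
    induction d with
    | zero => simp [h1]
    | succ d ih =>
      intro hd
      have a1 := ih (by omega)
      have a2 := hstep (k - (d+1)) (by omega)
      rw [show k - (d+1) + 1 = k - d by omega] at a2
      rw [Nat.add_mul]; omega
  refine ⟨h0, h1, ?_, fun j _ i hij => hmono hij⟩
  intro i hi
  have a1 := hlow i hi
  have a2 := hup (k - i) (by omega)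
  rw [show k - (k - i) = i by omega] at a2
  have a3 : (k - i) * ℓ + i * ℓ = n := by
    rw [← Nat.add_mul, hn]; congr 1; omega
  omega

lemma final_eq {n k ℓ : ℕ} (hk : 2 ≤ k) (hn : n = k * ℓ) (hℓ : 2 ≤ ℓ)
    (hg : 2 * (k * ((k*ℓ) * (k*ℓ))) + k < 2^(ℓ/2))
    (ℱ : Finset (Finset (Fin n))) (hcard : ℱ.card = k * 2^ℓ - k + 1)
    (hmax : ∀ 𝒢 : Finset (Finset (Fin n)), 𝒢.card = ℱ.card → compCount 𝒢 ≤ compCount ℱ)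
    (P : ℕ → Finset (Finset (Fin n))) (hPF : ∀ i, P i ⊆ ℱ)
    (hdisj : ∀ i < k, ∀ j < k, i ≠ j → Disjoint (P i) (P j))
    (hsize : ∀ i < k, (1 - 1/(16*k)) * (2:ℝ)^ℓ ≤ (P i).card)
    (X : ℕ → Finset (Fin n)) (hT : IsTw k ℓ X)
    (hP : ∀ i < k, ∀ A ∈ P i, X i ⊆ A ∧ A ⊆ X (i+1)) : ℱ = TT k X := by
  have hk' : (2:ℝ) ≤ k := by exact_mod_cast hk
  have hN1 : 1 ≤ 2^ℓ := Nat.one_le_two_pow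
  have hmul : k * (2^ℓ - 1) = k * 2^ℓ - k := by rw [Nat.mul_sub, mul_one]
  have hkle : k ≤ k * 2^ℓ := Nat.le_mul_of_pos_right _ (by positivity)
  have hTc : (TT k X).card = ℱ.card := by rw [TT_card hT (by omega), hcard, hmul]
  set T := TT k X with hTdef
  set r := (ℱ \ T).card with hr
  have hr2 : (T \ ℱ).card = r := by
    have a1 := Finset.card_sdiff_add_card_inter ℱ T
    have a2 := Finset.card_sdiff_add_card_inter T ℱ
    rw [Finset.inter_comm] at a2
    omega
  have hr16 : (16:ℝ) * r ≤ 2^ℓ := by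
    have hsub : (Finset.range k).biUnion P ⊆ ℱ ∩ T := by
      intro A hA
      obtain ⟨i, hi, hA⟩ := Finset.mem_biUnion.1 hA
      rw [Finset.mem_range] at hi
      exact Finset.mem_inter.2 ⟨hPF i hA, mem_TT.2 ⟨i, hi, hP i hi A hA⟩⟩
    have h1 := Finset.card_le_card hsub
    rw [Finset.card_biUnion (by
      intro i hi j hj hij
      exact hdisj i (Finset.mem_range.1 hi) j (Finset.mem_range.1 hj) hij)] at h1
    have h2 : (k:ℝ) * ((1 - 1/(16*k)) * (2:ℝ)^ℓ) ≤ ((∑ i ∈ Finset.range k, (P i).card : ℕ) : ℝ) := by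
      push_cast
      calc (k:ℝ) * ((1 - 1/(16*k)) * (2:ℝ)^ℓ) = ∑ i ∈ Finset.range k, ((1 - 1/(16*k)) * (2:ℝ)^ℓ) := by
            simp
        _ ≤ _ := Finset.sum_le_sum (fun i hi => hsize i (Finset.mem_range.1 hi))
    have h3 : (k:ℝ) * ((1 - 1/(16*k)) * (2:ℝ)^ℓ) = k * 2^ℓ - 2^ℓ/16 := by
      field_simp
    have h4 : ((∑ i ∈ Finset.range k, (P i).card : ℕ) : ℝ) ≤ (ℱ ∩ T).card := by exact_mod_cast h1
    have h5 := Finset.card_sdiff_add_card_inter ℱ T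
    have h6 : r + (ℱ ∩ T).card ≤ k * 2^ℓ := by omega
    have h7 : (r:ℝ) + (ℱ ∩ T).card ≤ k * 2^ℓ := by exact_mod_cast h6
    linarith
  have hswap : ∀ F ∈ ℱ \ T, ∀ A ∈ T \ ℱ, (cmpSet A T).card ≤ (cmpSet F T).card + 2 * r := by
    intro F hF A hA
    rw [Finset.mem_sdiff] at hF hA
    set 𝒢 := ℱ.erase F with hG
    have hAG : A ∉ 𝒢 := fun h => hA.2 (Finset.mem_of_mem_erase h)
    have h1 := hmax (insert A 𝒢) (by
      rw [Finset.card_insert_of_notMem hAG, Finset.card_erase_add_one hF.1])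
    have h1b : compCount ℱ = compCount 𝒢 + (cmpSet F 𝒢).card := by
      have := compCount_insert 𝒢 F (Finset.notMem_erase _ _)
      rwa [hG, Finset.insert_erase hF.1] at this
    rw [compCount_insert _ _ hAG, h1b] at h1
    have h2 : cmpSet F 𝒢 ⊆ cmpSet F T ∪ (ℱ \ T) := by
      intro C hC
      obtain ⟨hC1, hC2⟩ := Finset.mem_filter.1 hC
      by_cases hCT : C ∈ T
      · exact Finset.mem_union_left _ (Finset.mem_filter.2 ⟨hCT, hC2⟩)
      · exact Finset.mem_union_right _ (Finset.mem_sdiff.2 ⟨Finset.mem_of_mem_erase hC1, hCT⟩)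
    have h3 : cmpSet A T ⊆ cmpSet A 𝒢 ∪ (T \ ℱ) := by
      intro C hC
      obtain ⟨hC1, hC2⟩ := Finset.mem_filter.1 hC
      by_cases hCT : C ∈ ℱ
      · refine Finset.mem_union_left _ (Finset.mem_filter.2 ⟨Finset.mem_erase.2 ⟨?_, hCT⟩, hC2⟩)
        rintro rfl
        exact hF.2 hC1
      · exact Finset.mem_union_right _ (Finset.mem_sdiff.2 ⟨hC1, hCT⟩)
    have h4 := (Finset.card_le_card h2).trans (Finset.card_union_le _ _)
    have h5 := (Finset.card_le_card h3).trans (Finset.card_union_le _ _)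
    omega
  have hr0 : r = 0 := by
    by_contra hne
    obtain ⟨A, hA⟩ := Finset.card_pos.1 (show 0 < (T \ ℱ).card by omega)
    have hlow := cmp_mem_lower hT (by omega) (Finset.mem_sdiff.1 hA).1
    rw [← hTdef] at hlow
    have hlow' : (k:ℝ) * 2^ℓ - k + 2^(ℓ/2) ≤ (cmpSet A T).card + 2^ℓ := by
      have : k * 2^ℓ + 2^(ℓ/2) ≤ (cmpSet A T).card + 2^ℓ + k := by omega
      have : (k:ℝ) * 2^ℓ + 2^(ℓ/2) ≤ (cmpSet A T).card + 2^ℓ + k := by exact_mod_cast this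
      linarith
    have hg' : (k:ℝ) + 2 * (k * ((k*ℓ) * (k*ℓ))) < 2^(ℓ/2) := by
      rw [add_comm]; exact_mod_cast hg
    have hNpos : (0:ℝ) < 2^ℓ := by positivity
    have hq : (0:ℝ) ≤ 2 * (k * ((k*ℓ) * (k*ℓ))) := by positivity
    have hnear : ∀ F ∈ ℱ \ T, ∃ i < k, ∃ x y, F = insert y ((X i).erase x) := by
      intro F hF
      by_contra hno
      have h1 := (cmp_not_mem_upper hT hk hℓ (Finset.mem_sdiff.1 hF).2).2 hno
      have h2 : ((cmpSet A T).card : ℝ) ≤ (cmpSet F T).card + 2 * r := by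
        exact_mod_cast hswap F hF A hA
      rw [← hTdef] at h1
      linarith
    have hrn := near_card X (ℱ \ T) hnear
    obtain ⟨F, hF⟩ := Finset.card_pos.1 (show 0 < (ℱ \ T).card by omega)
    have h1 := (cmp_not_mem_upper hT hk hℓ (Finset.mem_sdiff.1 hF).2).1
    have h2 : ((cmpSet A T).card : ℝ) ≤ (cmpSet F T).card + 2 * r := by
      exact_mod_cast hswap F hF A hA
    rw [← hTdef] at h1
    have h3 : (r:ℝ) ≤ k * ((k*ℓ) * (k*ℓ)) := by
      have : r ≤ k * ((k*ℓ) * (k*ℓ)) := by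
        have hh : k * (n * n) = k * ((k*ℓ) * (k*ℓ)) := by rw [← hn]
        rw [← hh]; exact hrn
      exact_mod_cast this
    linarith
  have hsub : ℱ ⊆ T := by
    rw [← Finset.sdiff_eq_empty_iff_subset]
    exact Finset.card_eq_zero.1 hr0
  exact Finset.eq_of_subset_of_card_le hsub (by omega)

theorem stmt6 (k : ℕ) (hk : 2 ≤ k) :
    ∃ n₀ : ℕ, ∀ n ≥ n₀, k ∣ n →
      ∀ ℱ : Finset (Finset (Fin n)),
        ℱ.card = k * 2 ^ (n / k) - k + 1 →
        compCount ℱ = maxComp n (k * 2 ^ (n / k) - k + 1) →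
        IsTower n k ℱ := by
  obtain ⟨L0, hL0⟩ := stability k hk
  obtain ⟨L1, hL1⟩ := growth k
  refine ⟨k * (L0 + L1 + 2), fun n hn hkn ℱ hcard hcomp => ?_⟩
  have hkpos : 0 < k := by omega
  have hℓ : L0 + L1 + 2 ≤ n / k := by
    rw [Nat.le_div_iff_mul_le hkpos, mul_comm]; exact hn
  have hnk : n = k * (n / k) := (Nat.mul_div_cancel' hkn).symm
  generalize hℓdef : n / k = ℓ at *
  have hmax : ∀ 𝒢 : Finset (Finset (Fin n)), 𝒢.card = ℱ.card → compCount 𝒢 ≤ compCount ℱ := by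
    intro 𝒢 h𝒢
    rw [hcomp, maxComp]
    apply Finset.le_sup (f := compCount)
    rw [Finset.mem_powersetCard]
    exact ⟨Finset.subset_univ _, by rw [h𝒢, hcard]⟩
  have hmul : k * (2^ℓ - 1) = k * 2^ℓ - k := by rw [Nat.mul_sub, mul_one]
  obtain ⟨Y, hY⟩ := std_tower k ℓ n hnk
  have hlow : (k : ℝ) * (k-1) / 2 * (2^ℓ-1)^2 ≤ compCount ℱ := by
    refine (TT_comp hY hkpos).trans ?_
    exact_mod_cast hmax _ (by rw [TT_card hY hkpos, hcard, hmul])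
  obtain ⟨P, hPF, hdisj, hsize, hcross⟩ := hL0 ℓ (by omega) n hnk ℱ hcard hlow
  obtain ⟨X, h0, h1, hX, hP⟩ := build_tower k hk ℓ n hnk P hsize hcross
  have hT := final_IsTw hk hnk P hsize X h0 h1 hX hP
  have heq := final_eq hk hnk (by omega) (hL1 ℓ (by omega)) ℱ hcard hmax P hPF hdisj hsize X hT hP
  refine ⟨X, h0, h1, ?_, fun i _ => hX i, ?_⟩
  · intro i hi
    rw [hℓdef]; exact hT.2.2.1 i hi
  · rw [heq]
    ext F
    rw [mem_TT, Finset.mem_filter]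
    constructor
    · rintro ⟨i, hi, hF⟩
      exact ⟨Finset.mem_univ _, i + 1, Finset.mem_Icc.2 ⟨by omega, by omega⟩, by simpa using hF⟩
    · rintro ⟨_, i, hi, hF⟩
      rw [Finset.mem_Icc] at hi
      refine ⟨i - 1, by omega, hF.1, ?_⟩
      rw [show i - 1 + 1 = i by omega]; exact hF.2
end

section
/- Let k ≥ 2 be an integer dividing n, let ℓ = n/k, and let ℱ be a tower of k cubes of dimension ℓ over [n]. Then |ℱ| = k·2^{ℓ} − k + 1 and c(ℱ) ≥ (1 − 1/k)·binom(|ℱ|,2). -/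
open Finset

def towG {n : ℕ} (X : ℕ → Finset (Fin n)) : ℕ → Finset (Finset (Fin n))
  | 0 => ∅
  | j + 1 => towG X j ∪ Finset.Ico (X j) (X (j + 1))

lemma crossComp_union {n : ℕ} (A B : Finset (Finset (Fin n)))
    (h : ∀ a ∈ A, ∀ b ∈ B, a ⊂ b) :
    (A ∪ B).card = A.card + B.card ∧
      crossComp A A + A.card * B.card ≤ crossComp (A ∪ B) (A ∪ B) := by
  have hd : Disjoint A B := by
    rw [Finset.disjoint_left]
    intro a ha hb
    exact (h a ha a hb).ne rfl
  refine ⟨Finset.card_union_of_disjoint hd, ?_⟩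
  unfold crossComp
  rw [← Finset.card_product, ← Finset.card_union_of_disjoint]
  · apply Finset.card_le_card
    rintro ⟨a, b⟩ hab
    simp only [Finset.mem_union, Finset.mem_filter, Finset.mem_product] at hab ⊢
    rcases hab with ⟨⟨h1, h2⟩, h3⟩ | ⟨h1, h2⟩
    · exact ⟨⟨Or.inl h1, Or.inl h2⟩, h3⟩
    · exact ⟨⟨Or.inl h1, Or.inr h2⟩, h a h1 b h2⟩
  · rw [Finset.disjoint_left]
    rintro ⟨a, b⟩ h1 h2
    simp only [Finset.mem_filter, Finset.mem_product] at h1 h2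
    exact Finset.disjoint_left.mp hd h1.1.2 h2.2

lemma towG_spec {n k l : ℕ} (X : ℕ → Finset (Fin n)) (h0 : X 0 = ∅)
    (hc : ∀ i ≤ k, (X i).card = i * l) (hs : ∀ i < k, X i ⊆ X (i + 1)) :
    ∀ j ≤ k, (∀ F ∈ towG X j, F ⊂ X j) ∧ (towG X j).card = j * (2 ^ l - 1) ∧
      j * j * (2 ^ l - 1) ^ 2 ≤
        2 * crossComp (towG X j) (towG X j) + j * (2 ^ l - 1) ^ 2 ∧
      ∀ F, (F ∈ towG X j ∨ F = X j) ↔ (F = ∅ ∨ ∃ i < j, X i ⊆ F ∧ F ⊆ X (i + 1)) := by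
  intro j
  induction j with
  | zero => intro _; simp [towG, h0]
  | succ j ih =>
    intro hj
    obtain ⟨i1, i2, i3, i4⟩ := ih (by omega)
    have hsub := hs j (by omega)
    have hlt : ∀ a ∈ towG X j, ∀ b ∈ Finset.Ico (X j) (X (j + 1)), a ⊂ b := by
      intro a ha b hb
      exact lt_of_lt_of_le (i1 a ha) (Finset.mem_Ico.mp hb).1
    have hcard : (Finset.Ico (X j) (X (j + 1))).card = 2 ^ l - 1 := by
      rw [Finset.card_Ico_finset hsub, hc _ hj, hc j (by omega), Nat.succ_mul,
        Nat.add_sub_cancel_left]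
    obtain ⟨c1, c2⟩ := crossComp_union _ _ hlt
    rw [hcard, i2] at c1 c2
    refine ⟨?_, ?_, ?_, ?_⟩
    · intro F hF
      rcases Finset.mem_union.mp hF with h | h
      · exact lt_of_lt_of_le (i1 F h) hsub
      · exact (Finset.mem_Ico.mp h).2
    · rw [towG, c1]; ring
    · rw [towG]; nlinarith
    · intro F
      have key : (F ∈ towG X (j + 1) ∨ F = X (j + 1)) ↔
          ((F ∈ towG X j ∨ F = X j) ∨ (X j ⊆ F ∧ F ⊆ X (j + 1))) := by
        have e : F ∈ Finset.Ico (X j) (X (j + 1)) ↔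
            X j ⊆ F ∧ F ⊆ X (j + 1) ∧ F ≠ X (j + 1) := by
          rw [Finset.mem_Ico, lt_iff_le_and_ne]
        rw [towG, Finset.mem_union, e]
        by_cases hF : F = X (j + 1)
        · subst hF; simp [hsub]
        · by_cases hF2 : F = X j
          · subst hF2; simp [hsub, hF]
          · simp [hF, hF2]
      rw [key, i4]
      constructor
      · rintro ((h | ⟨i, hi, h⟩) | h)
        · exact Or.inl h
        · exact Or.inr ⟨i, by omega, h⟩
        · exact Or.inr ⟨j, by omega, h⟩
      · rintro (h | ⟨i, hi, h⟩)
        · exact Or.inl (Or.inl h)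
        · rcases Nat.lt_succ_iff_lt_or_eq.mp hi with h' | h'
          · exact Or.inl (Or.inr ⟨i, h', h⟩)
          · subst h'; exact Or.inr h

theorem stmt7 (n k : ℕ) (hk : 2 ≤ k) (hdvd : k ∣ n)
    (ℱ : Finset (Finset (Fin n))) (hT : IsTower n k ℱ) :
    ℱ.card = k * 2 ^ (n / k) - k + 1 ∧
      (1 - 1 / (k : ℝ)) * (ℱ.card.choose 2 : ℝ) ≤ (compCount ℱ : ℝ) := by
  obtain ⟨X, h0, h1, hc, hs, hF⟩ := hT
  obtain ⟨g1, g2, g3, g4⟩ := towG_spec X h0 hc hs k le_rfl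
  have hFe : ℱ = towG X k ∪ {Finset.univ} := by
    ext F
    rw [Finset.mem_union, Finset.mem_singleton, ← h1, g4, hF]
    simp only [Finset.mem_filter, Finset.mem_univ, true_and, Finset.mem_Icc]
    constructor
    · rintro ⟨i, ⟨hi1, hi2⟩, h⟩
      refine Or.inr ⟨i - 1, by omega, h.1, ?_⟩
      rw [Nat.sub_add_cancel hi1]; exact h.2
    · rintro (h | ⟨i, hi, h⟩)
      · refine ⟨1, by omega, ?_, ?_⟩
        · simp [h0]
        · simp [h]
      · exact ⟨i + 1, by omega, h⟩
  obtain ⟨c1, c2⟩ := crossComp_union (towG X k) {Finset.univ} (by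
    intro a ha b hb
    rw [Finset.mem_singleton.mp hb, ← h1]; exact g1 a ha)
  rw [← hFe, g2, Finset.card_singleton] at c1 c2
  refine ⟨by rw [c1, Nat.mul_sub, mul_one], ?_⟩
  rw [c1, Nat.cast_choose_two]
  unfold compCount
  generalize 2 ^ (n / k) - 1 = m at *
  have c2' : (crossComp (towG X k) (towG X k) : ℝ) + k * m * 1 ≤ crossComp ℱ ℱ := by
    exact_mod_cast c2
  have g3' : (k : ℝ) * k * m ^ 2 ≤ 2 * crossComp (towG X k) (towG X k) + k * m ^ 2 := by
    exact_mod_cast g3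
  have hk0 : (k : ℝ) ≠ 0 := by positivity
  have e : (1 - 1 / (k : ℝ)) * (((k * m + 1 : ℕ) : ℝ) * (((k * m + 1 : ℕ) : ℝ) - 1) / 2)
      = ((k : ℝ) - 1) * m * (k * m + 1) / 2 := by
    push_cast; field_simp; ring
  rw [e]
  have hp : (0 : ℝ) ≤ k * m := by positivity
  have hm : (0 : ℝ) ≤ m := by positivity
  nlinarith
end

section
/- For every ε > 0 there exist ℓ₀ and n₀ such that for all integers ℓ ≥ ℓ₀ and n ≥ n₀ with nℓ ≤ 2^n, every family ℱ of nℓ subsets of [n] satisfies i(ℱ) ≥ (1/2 − ε)·n·ℓ²·log ℓ; that is, i(n, nℓ) ≥ (1/2 − ε)·n·ℓ²·log ℓ. -/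
open Finset

/-- `incompCount ℱ = i(ℱ)` is the number of incomparable (unordered, distinct) pairs in `ℱ`. -/
def incompCount {n : ℕ} (ℱ : Finset (Finset (Fin n))) : ℕ :=
  ℱ.card.choose 2 - compCount ℱ

open Finset

open Classical in
lemma ext_count {ι κ α : Type} [Fintype ι] [Fintype κ] [Fintype α]
    [DecidableEq ι] [DecidableEq κ] (σ : ι → κ) (hσ : Function.Injective σ) (R : (ι → α) → Prop) :
    (Fintype.card α) ^ (Fintype.card ι) * #{X : κ → α | R (X ∘ σ)} ≤
      #{x : ι → α | R x} * (Fintype.card α) ^ (Fintype.card κ) := by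
  have h : #((univ : Finset (ι → α)) ×ˢ ({X : κ → α | R (X ∘ σ)} : Finset _)) ≤
      #(({x : ι → α | R x} : Finset _) ×ˢ (univ : Finset (κ → α))) := by
    apply Finset.card_le_card_of_injOn
      (fun z => (z.2 ∘ σ, Function.extend σ z.1 z.2))
    · intro z hz
      simp at hz ⊢
      exact hz
    · rintro ⟨y, X⟩ - ⟨y', X'⟩ - h
      simp only [Prod.mk.injEq] at h
      obtain ⟨h1, h2⟩ := h
      refine Prod.ext ?_ ?_
      · funext a
        have := congrFun h2 (σ a)
        rwa [hσ.extend_apply, hσ.extend_apply] at this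
      · funext b
        by_cases hb : ∃ a, σ a = b
        · obtain ⟨a, rfl⟩ := hb
          exact congrFun h1 a
        · have := congrFun h2 b
          rwa [Function.extend_apply' _ _ _ hb, Function.extend_apply' _ _ _ hb] at this
  simpa [Finset.card_product] using h

open Classical in
/-- Mirsky plus Cauchy-Schwarz. -/
lemma mirsky {α ι : Type} [PartialOrder α] [Fintype ι] {r : ℕ} (X : ι → α)
    (h : ¬ ∃ σ : Fin (r+1) → ι, StrictMono (X ∘ σ)) :
    (Fintype.card ι) ^ 2 ≤ r * #{s : ι × ι | ¬ X s.1 < X s.2 ∧ ¬ X s.2 < X s.1} := by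
  let : Preorder (ι) := Preorder.lift X
  have hlt : ∀ s s' : ι, s < s' ↔ X s < X s' := fun s s' => Iff.rfl
  have hh : ∀ s : ι, Order.height s < r := by
    intro s
    by_contra hs
    push Not at hs
    obtain ⟨p, -, hp⟩ := Order.exists_series_of_le_height s hs
    apply h
    subst hp
    exact ⟨p.toFun, fun i j hij => (hlt _ _).1 (p.strictMono hij)⟩
  obtain ⟨c, hcc⟩ : ∃ c : ι → ℕ, ∀ s, ((c s : ℕ) : ℕ∞) = Order.height s :=
    ⟨fun s => (Order.height s).toNat, fun s => ENat.natCast_toNat (ne_top_of_lt (hh s))⟩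
  have hc : ∀ s, c s < r := by
    intro s
    have := hh s
    have h2 : ((c s : ℕ) : ℕ∞) = Order.height s := hcc s
    rw [← h2] at this
    exact_mod_cast this
  have hmono : ∀ s s', X s < X s' → c s ≠ c s' := by
    intro s s' hss e
    have h1 : Order.height s < Order.height s' :=
      Order.height_strictMono ((hlt _ _).2 hss) (lt_of_lt_of_le (hh s) le_top)
    have h2 : ((c s : ℕ) : ℕ∞) = Order.height s := hcc s
    have h3 : ((c s' : ℕ) : ℕ∞) = Order.height s' := hcc s'
    rw [← h2, ← h3, e] at h1
    exact lt_irrefl _ h1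
  have e1 : Fintype.card ι = ∑ i ∈ range r, #{s : ι | c s = i} := by
    have := Finset.card_eq_sum_card_fiberwise (s := (univ : Finset (ι))) (t := range r) (f := c)
      (by intro s _; simpa using hc s)
    simpa using this
  have e2 : (∑ i ∈ range r, #{s : ι | c s = i}) ^ 2 ≤
      r * ∑ i ∈ range r, #{s : ι | c s = i} ^ 2 := by
    have := sq_sum_le_card_mul_sum_sq (s := range r) (f := fun i => #{s : ι | c s = i})
    simpa using this
  have e3 : ∑ i ∈ range r, #{s : ι | c s = i} ^ 2 ≤
      #{s : ι × ι | ¬ X s.1 < X s.2 ∧ ¬ X s.2 < X s.1} := by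
    have : ∀ i, #{s : ι | c s = i} ^ 2 =
        #(({s : ι | c s = i} : Finset _) ×ˢ ({s : ι | c s = i} : Finset _)) := by
      intro i; rw [Finset.card_product, sq]
    simp_rw [this]
    rw [← Finset.card_biUnion]
    · apply Finset.card_le_card
      intro z hz
      simp only [mem_biUnion, mem_product, mem_filter, mem_univ, true_and] at hz ⊢
      obtain ⟨i, -, h1, h2⟩ := hz
      exact ⟨fun hl => hmono _ _ hl (h1.trans h2.symm), fun hl => hmono _ _ hl (h2.trans h1.symm)⟩
    · intro i _ j _ hij
      rw [Function.onFun, Finset.disjoint_left]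
      intro z hz hz'
      simp at hz hz'
      exact hij (hz.1.symm.trans hz'.1)
  calc (Fintype.card ι) ^ 2 = (∑ i ∈ range r, #{s : ι | c s = i}) ^ 2 := by rw [← e1]
    _ ≤ _ := e2
    _ ≤ _ := Nat.mul_le_mul_left _ e3

open Classical in
noncomputable def nonComp (α : Type) [Fintype α] [PartialOrder α] : ℕ :=
  #{s : α × α | ¬ s.1 < s.2 ∧ ¬ s.2 < s.1}

open Classical in
noncomputable def chains (α : Type) [Fintype α] [PartialOrder α] (p : ℕ) : ℕ :=
  #{x : Fin p → α | StrictMono x}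

open Classical in
lemma supersat (α : Type) [Fintype α] [Nonempty α] [PartialOrder α] (q r : ℕ) (hq : 0 < q) :
    (1:ℝ) ≤ q ^ (r+1) * (chains α (r+1) / (Fintype.card α : ℝ) ^ (r+1)) +
      r * (1 / q + nonComp α / (Fintype.card α : ℝ) ^ 2) := by
  set M := Fintype.card α with hM
  have hM0 : (0:ℝ) < M := by exact_mod_cast Fintype.card_pos
  let good : Finset (Fin q → α) := {X | ∃ σ : Fin (r+1) → Fin q, StrictMono (X ∘ σ)}
  let bad : Finset (Fin q → α) := {X | ¬ ∃ σ : Fin (r+1) → Fin q, StrictMono (X ∘ σ)}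
  have htot : #good + #bad = M ^ q := by
    have := Finset.card_filter_add_card_filter_not (s := (univ : Finset (Fin q → α)))
      (fun X => ∃ σ : Fin (r+1) → Fin q, StrictMono (X ∘ σ))
    simpa [good, bad] using this
  have hgood : (#good : ℝ) ≤ q ^ (r+1) * (chains α (r+1) / (M : ℝ) ^ (r+1)) * M ^ q := by
    have h1 : #good ≤ ∑ σ : Fin (r+1) → Fin q, #{X : Fin q → α | StrictMono (X ∘ σ)} := by
      refine le_trans (Finset.card_le_card ?_) Finset.card_biUnion_le
      intro X hX
      simpa [good] using hX
    have h2 : ∀ σ : Fin (r+1) → Fin q, ((#{X : Fin q → α | StrictMono (X ∘ σ)} : ℕ) : ℝ) ≤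
        chains α (r+1) / (M : ℝ) ^ (r+1) * M ^ q := by
      intro σ
      by_cases hσ : Function.Injective σ
      · have := ext_count (α := α) σ hσ (fun x => StrictMono x)
        rw [Fintype.card_fin, Fintype.card_fin] at this
        have h3 : (M:ℝ) ^ (r+1) * (#{X : Fin q → α | StrictMono (X ∘ σ)} : ℕ) ≤
          (chains α (r+1) : ℝ) * M ^ q := by
          have h4 : M ^ (r+1) * (#{X : Fin q → α | StrictMono (X ∘ σ)} : ℕ) ≤
            chains α (r+1) * M ^ q := by unfold chains; convert this
          exact_mod_cast h4
        rw [div_mul_eq_mul_div, le_div_iff₀ (by positivity)]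
        linarith
      · have : #{X : Fin q → α | StrictMono (X ∘ σ)} = 0 := by
          rw [Finset.card_eq_zero, Finset.filter_eq_empty_iff]
          intro X _ hX
          exact hσ (Function.Injective.of_comp hX.injective)
        rw [this]
        simp only [Nat.cast_zero]
        positivity
    calc (#good : ℝ) ≤ ∑ σ : Fin (r+1) → Fin q, ((#{X : Fin q → α | StrictMono (X ∘ σ)} : ℕ) : ℝ) := by
          exact_mod_cast h1
      _ ≤ ∑ σ : Fin (r+1) → Fin q, (chains α (r+1) / (M : ℝ) ^ (r+1) * M ^ q) :=
          Finset.sum_le_sum fun σ _ => h2 σ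
      _ = _ := by simp; ring
  have hbad : (q:ℝ) ^ 2 * #bad ≤ r * (q + q ^ 2 * (nonComp α / (M : ℝ) ^ 2)) * M ^ q := by
    let N : (Fin q → α) → ℕ := fun X => #{s : Fin q × Fin q | ¬ X s.1 < X s.2 ∧ ¬ X s.2 < X s.1}
    have h1 : q ^ 2 * #bad ≤ r * ∑ X, N X := by
      calc q ^ 2 * #bad = ∑ X ∈ bad, q ^ 2 := by simp [mul_comm]
        _ ≤ ∑ X ∈ bad, r * N X := by
            apply Finset.sum_le_sum
            intro X hX
            have := mirsky X (r := r) (by simpa [bad] using hX)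
            rwa [Fintype.card_fin] at this
        _ ≤ ∑ X, r * N X := Finset.sum_le_sum_of_subset (Finset.subset_univ _)
        _ = _ := by rw [Finset.mul_sum]
    have h2 : ∑ X, N X = ∑ s : Fin q × Fin q,
        #{X : Fin q → α | ¬ X s.1 < X s.2 ∧ ¬ X s.2 < X s.1} := by
      simp only [N, Finset.card_filter]
      rw [Finset.sum_comm]
    have h3 : ∀ s : Fin q × Fin q,
        ((#{X : Fin q → α | ¬ X s.1 < X s.2 ∧ ¬ X s.2 < X s.1} : ℕ) : ℝ) ≤
        (if s.1 = s.2 then (M:ℝ) ^ q else 0) + nonComp α / (M : ℝ) ^ 2 * M ^ q := by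
      intro s
      split_ifs with hs
      · have : #{X : Fin q → α | ¬ X s.1 < X s.2 ∧ ¬ X s.2 < X s.1} ≤ M ^ q := by
          refine (Finset.card_le_univ _).trans ?_
          simp [hM]
        have h4 : ((#{X : Fin q → α | ¬ X s.1 < X s.2 ∧ ¬ X s.2 < X s.1} : ℕ) : ℝ) ≤ M ^ q := by
          exact_mod_cast this
        have : 0 ≤ nonComp α / (M : ℝ) ^ 2 * M ^ q := by positivity
        linarith
      · have := ext_count (α := α) (![s.1, s.2]) (by
          intro i j; fin_cases i <;> fin_cases j <;> simp [hs, Ne.symm hs])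
          (fun x => ¬ x 0 < x 1 ∧ ¬ x 1 < x 0)
        rw [Fintype.card_fin, Fintype.card_fin] at this
        have e : #(filter (fun x : Fin 2 → α => ¬ x 0 < x 1 ∧ ¬ x 1 < x 0) univ) ≤ nonComp α := by
          unfold nonComp
          apply le_of_eq
          refine Finset.card_bij' (fun x _ => (x 0, x 1)) (fun z _ => ![z.1, z.2]) ?_ ?_ ?_ ?_
          · intro x hx; simpa using hx
          · intro z hz; simpa using hz
          · intro x hx; funext i; fin_cases i <;> simp
          · intro z hz; simp
        have h5 : M ^ 2 * #{X : Fin q → α | ¬ X s.1 < X s.2 ∧ ¬ X s.2 < X s.1} ≤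
            nonComp α * M ^ q := by
          refine le_trans ?_ (this.trans ?_)
          · apply le_of_eq
            congr!
          · refine Nat.mul_le_mul_right _ (le_trans (le_of_eq ?_) e)
            congr!
        simp only [Function.comp, Matrix.cons_val_zero, Matrix.cons_val_one] at this
        have h4 : (M:ℝ) ^ 2 * (#{X : Fin q → α | ¬ X s.1 < X s.2 ∧ ¬ X s.2 < X s.1} : ℕ) ≤
          (nonComp α : ℝ) * M ^ q := by exact_mod_cast h5
        rw [zero_add, div_mul_eq_mul_div, le_div_iff₀ (by positivity)]
        linarith
    have h5 : ((∑ X, N X : ℕ) : ℝ) ≤ (q + q ^ 2 * (nonComp α / (M : ℝ) ^ 2)) * M ^ q := by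
      rw [h2]; push_cast
      refine (Finset.sum_le_sum fun s _ => h3 s).trans ?_
      rw [Finset.sum_add_distrib, Fintype.sum_prod_type]
      simp
      apply le_of_eq
      ring
    calc (q:ℝ) ^ 2 * #bad ≤ r * ((∑ X, N X : ℕ) : ℝ) := by exact_mod_cast h1
      _ ≤ r * ((q + q ^ 2 * (nonComp α / (M : ℝ) ^ 2)) * M ^ q) := by gcongr
      _ = _ := by ring
  have hq' : (0:ℝ) < q := by exact_mod_cast hq
  have hbad' : (#bad : ℝ) ≤ r * (1 / q + nonComp α / (M : ℝ) ^ 2) * M ^ q := by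
    have : (q:ℝ)^2 * #bad ≤ q^2 * (r * (1 / q + nonComp α / (M : ℝ) ^ 2) * M ^ q) := by
      refine hbad.trans (le_of_eq ?_)
      field_simp
    exact le_of_mul_le_mul_left this (by positivity)
  have htot' : (#good : ℝ) + #bad = M ^ q := by exact_mod_cast htot
  have hMq : (0:ℝ) < M ^ q := by positivity
  refine le_of_mul_le_mul_right ?_ hMq
  rw [one_mul, add_mul]
  linarith

open Classical in
lemma blowup {α : Type} [Fintype α] (t : ℕ) (p : ℕ) :
    ∀ (c : ℝ) (_ : 0 ≤ c) (Y : Type) [Fintype Y] (Q : Y → (Fin p → α) → Prop),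
    c * (Fintype.card Y * (Fintype.card α : ℝ) ^ p) ≤ #{z : Y × (Fin p → α) | Q z.1 z.2} →
    c ^ ((t+1) ^ p) * (Fintype.card Y * ((Fintype.card α : ℝ) ^ (t+1)) ^ p) ≤
      #{z : Y × (Fin p → Fin (t+1) → α) | ∀ σ : Fin p → Fin (t+1), Q z.1 (fun a => z.2 a (σ a))} := by
  induction p with
  | zero =>
    intro c hc Y _ Q h
    simp only [pow_zero, mul_one, pow_one] at h ⊢
    refine h.trans ?_
    norm_cast
    apply Finset.card_le_card_of_injOn (fun z => (z.1, fun a => a.elim0))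
    · intro z hz
      simp at hz ⊢
      convert hz using 1
    · rintro ⟨y, x⟩ - ⟨y', x'⟩ - h
      simp at h
      exact Prod.ext h (Subsingleton.elim _ _)
  | succ p ih =>
    intro c hc Y _ Q h
    set M := Fintype.card α with hM
    -- degrees
    let d : Y × (Fin p → α) → ℕ := fun z => #{a : α | Q z.1 (Fin.cons a z.2)}
    have hd : #{z : Y × (Fin (p+1) → α) | Q z.1 z.2} = ∑ z, d z := by
      simp only [d]
      rw [← Finset.card_sigma]
      refine Finset.card_bij' (fun z _ => ⟨(z.1, Fin.tail z.2), z.2 0⟩)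
        (fun w _ => (w.1.1, Fin.cons w.2 w.1.2)) ?_ ?_ ?_ ?_
      · intro z hz; simpa using hz
      · intro z hz; simpa using hz
      · intro z hz; simp
      · intro z hz; simp
    let Q' : (Y × (Fin (t+1) → α)) → (Fin p → α) → Prop :=
      fun y x => ∀ s, Q y.1 (Fin.cons (y.2 s) x)
    have hQ' : #{z : (Y × (Fin (t+1) → α)) × (Fin p → α) | Q' z.1 z.2} = ∑ z, d z ^ (t+1) := by
      have : ∀ z : Y × (Fin p → α), d z ^ (t+1) =
          #{g : Fin (t+1) → α | ∀ s, Q z.1 (Fin.cons (g s) z.2)} := by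
        intro z
        have := Fintype.card_piFinset_const ({a : α | Q z.1 (Fin.cons a z.2)} : Finset α) (t+1)
        simp only [d]
        rw [← this]
        congr 1
        ext g
        simp [Fintype.mem_piFinset]
      simp_rw [this]
      rw [← Finset.card_sigma]
      refine Finset.card_bij' (fun z _ => ⟨(z.1.1, z.2), z.1.2⟩)
        (fun w _ => ((w.1.1, w.2), w.1.2)) ?_ ?_ ?_ ?_
      · intro z hz; simpa [Q'] using hz
      · intro z hz; simpa [Q'] using hz
      · intro z hz; simp
      · intro z hz; simp
    have hpow := pow_sum_div_card_le_sum_pow (s := (univ : Finset (Y × (Fin p → α))))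
      (f := fun z => (d z : ℝ)) (fun z _ => Nat.cast_nonneg _) t
    have hcY : (Fintype.card (Y × (Fin (t+1) → α)) : ℝ) = Fintype.card Y * (M:ℝ) ^ (t+1) := by
      rw [Fintype.card_prod, Fintype.card_fun, Fintype.card_fin]; push_cast; rfl
    have key : c ^ (t+1) * (Fintype.card (Y × (Fin (t+1) → α)) * (M : ℝ) ^ p) ≤
        #{z : (Y × (Fin (t+1) → α)) × (Fin p → α) | Q' z.1 z.2} := by
      rw [hQ']
      push_cast
      have hcard : ((#(univ : Finset (Y × (Fin p → α))) : ℕ) : ℝ) = Fintype.card Y * (M:ℝ) ^ p := by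
        simp [hM]
      rw [hcard] at hpow
      have h2 : c * (Fintype.card Y * (M : ℝ) ^ (p+1)) ≤ ∑ z, (d z : ℝ) := by
        rw [hd] at h; exact_mod_cast h
      by_cases hz : (Fintype.card Y * (M:ℝ) ^ p) = 0
      · have : c ^ (t+1) * (Fintype.card (Y × (Fin (t+1) → α)) * (M : ℝ) ^ p) = 
          c ^ (t+1) * M ^ (t+1) * (Fintype.card Y * (M:ℝ) ^ p) := by
          rw [hcY]; ring
        rw [this, hz, mul_zero]
        exact Finset.sum_nonneg fun z _ => pow_nonneg (Nat.cast_nonneg _) _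
      · have hpos : 0 < (Fintype.card Y * (M:ℝ) ^ p) := lt_of_le_of_ne (by positivity) (Ne.symm hz)
        refine le_trans ?_ hpow
        rw [le_div_iff₀ (by positivity)]
        calc c ^ (t + 1) * (Fintype.card (Y × (Fin (t + 1) → α)) * (M:ℝ) ^ p) * (Fintype.card Y * (M:ℝ) ^ p) ^ t
            = (c * (Fintype.card Y * (M : ℝ) ^ (p+1))) ^ (t+1) := by
              rw [hcY]; ring
          _ ≤ _ := pow_le_pow_left₀ (by positivity) h2 _
    have fin := ih (c ^ (t+1)) (by positivity) (Y × (Fin (t+1) → α)) Q' (by convert key)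
    calc c ^ ((t+1) ^ (p+1)) * (Fintype.card Y * ((M : ℝ) ^ (t+1)) ^ (p+1))
        = (c ^ (t+1)) ^ ((t+1) ^ p) * (Fintype.card (Y × (Fin (t+1) → α)) * ((M : ℝ) ^ (t+1)) ^ p) := by
          rw [hcY, ← pow_mul]; ring
      _ ≤ _ := fin
      _ ≤ _ := by
        norm_cast
        apply Finset.card_le_card_of_injOn (fun z => (z.1.1, Fin.cons z.1.2 z.2))
        · intro z hz
          simp only [coe_filter, mem_univ, true_and, Set.mem_ofPred_eq, Q'] at hz ⊢
          intro σ
          have := hz (fun a => σ a.succ) (σ 0)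
          convert this using 1
          funext a
          refine Fin.cases ?_ (fun a => ?_) a <;> simp
        · rintro ⟨⟨y, g⟩, x⟩ - ⟨⟨y', g'⟩, x'⟩ - h
          simp [Fin.cons_inj] at h
          obtain ⟨h1, h2, h3⟩ := h
          simp [h1, h2, h3]
def frameQ {n : ℕ} (F : Finset (Finset (Fin n))) {p : ℕ} (lo hi : Finset (Fin n))
    (x : Fin p → F) : Prop :=
  StrictMono x ∧ ∀ a, lo ⊆ (x a).1 ∧ (x a).1 ⊆ hi

lemma frame_exists {n : ℕ} (F : Finset (Finset (Fin n))) {p t D : ℕ} (hp : 0 < p)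
    (lo hi : Finset (Fin n)) (hfr : lo ⊆ hi → #(hi \ lo) ≤ D)
    (X : Fin p → Fin (t+1) → F) (hX : ∀ σ : Fin p → Fin (t+1), frameQ F lo hi (fun a => X a (σ a))) :
    lo ⊆ hi ∧ ∃ a : Fin p, ∃ I ∈ Icc lo hi, ∃ U ∈ Icc lo hi, #(U \ I) ≤ D / p ∧ I ⊆ U ∧
      ∀ s, I ⊆ (X a s).1 ∧ (X a s).1 ⊆ U := by
  have hfr1 : ∀ a s, lo ⊆ (X a s).1 ∧ (X a s).1 ⊆ hi := fun a s => (hX (fun _ => s)).2 a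
  have hlh : lo ⊆ hi := (hfr1 ⟨0, hp⟩ 0).1.trans (hfr1 ⟨0, hp⟩ 0).2
  refine ⟨hlh, ?_⟩
  have hmono : ∀ a b s s', a < b → (X a s).1 ⊆ (X b s').1 := by
    intro a b s s' hab
    have := (hX (fun i => if i = a then s else s')).1 hab
    simp only [if_true, if_neg hab.ne'] at this
    exact this.le
  let U : Fin p → Finset (Fin n) := fun a => univ.biUnion (fun s => (X a s).1)
  let I : Fin p → Finset (Fin n) := fun a => univ.filter (fun x => ∀ s, x ∈ (X a s).1)
  have hsum : ∑ a, #(U a \ I a) ≤ D := by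
    rw [← Finset.card_biUnion]
    · refine (Finset.card_le_card ?_).trans (hfr hlh)
      intro x hx
      simp only [mem_biUnion, mem_univ, true_and, mem_sdiff, U, I, mem_filter, not_forall] at hx
      obtain ⟨a, ⟨s, hs⟩, ⟨s', hs'⟩⟩ := hx
      rw [mem_sdiff]
      exact ⟨(hfr1 a s).2 hs, fun h => hs' ((hfr1 a s').1 h)⟩
    · intro a _ b _ hab
      rw [Function.onFun, Finset.disjoint_left]
      intro x hx hx'
      simp only [mem_biUnion, mem_univ, true_and, mem_sdiff, U, I, mem_filter, not_forall] at hx hx'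
      obtain ⟨⟨s, hs⟩, ⟨s', hs'⟩⟩ := hx
      obtain ⟨⟨u, hu⟩, ⟨u', hu'⟩⟩ := hx'
      rcases lt_or_gt_of_ne hab with h | h
      · exact hu' (hmono _ _ s u' h hs)
      · exact hs' (hmono _ _ u s' h hu)
  obtain ⟨a, ha⟩ : ∃ a, #(U a \ I a) ≤ D / p := by
    by_contra hcon
    push Not at hcon
    have h1 : ∑ a : Fin p, (D / p + 1) ≤ ∑ a, #(U a \ I a) :=
      Finset.sum_le_sum fun a _ => hcon a
    simp only [sum_const, card_univ, Fintype.card_fin, smul_eq_mul] at h1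
    have := Nat.lt_mul_div_succ D hp
    omega
  refine ⟨a, I a, ?_, U a, ?_, ha, ?_, ?_⟩
  · rw [mem_Icc]
    refine ⟨fun x hx => ?_, fun x hx => ?_⟩
    · simp only [I, mem_filter, mem_univ, true_and]
      exact fun s => (hfr1 a s).1 hx
    · simp only [I, mem_filter, mem_univ, true_and] at hx
      exact (hfr1 a 0).2 (hx 0)
  · rw [mem_Icc]
    refine ⟨fun x hx => ?_, fun x hx => ?_⟩
    · simp only [U, mem_biUnion, mem_univ, true_and]
      exact ⟨0, (hfr1 a 0).1 hx⟩
    · simp only [U, mem_biUnion, mem_univ, true_and] at hx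
      obtain ⟨s, hs⟩ := hx
      exact (hfr1 a s).2 hs
  · intro x hx
    simp only [I, mem_filter, mem_univ, true_and] at hx
    simp only [U, mem_biUnion, mem_univ, true_and]
    exact ⟨0, hx 0⟩
  · intro s
    refine ⟨fun x hx => ?_, fun x hx => ?_⟩
    · simp only [I, mem_filter, mem_univ, true_and] at hx
      exact hx s
    · simp only [U, mem_biUnion, mem_univ, true_and]
      exact ⟨s, hx⟩

open Classical in
lemma frame_one {n : ℕ} (F : Finset (Finset (Fin n))) {p t d : ℕ} (a : Fin p)
    (I U : Finset (Fin n)) (hIU : I ⊆ U) (hd : #(U \ I) ≤ d) :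
    (#F) ^ (t+1) * #{X : Fin p → Fin (t+1) → F | ∀ s, I ⊆ (X a s).1 ∧ (X a s).1 ⊆ U} ≤
      (2 ^ d) ^ (t+1) * ((#F) ^ (t+1)) ^ p := by
  have := ext_count (α := Fin (t+1) → F) (fun _ : Unit => a) (fun _ _ _ => rfl)
    (fun x => ∀ s, I ⊆ (x () s).1 ∧ (x () s).1 ⊆ U)
  simp only [Fintype.card_fun, Fintype.card_fin, Fintype.card_coe, Fintype.card_unit, pow_one,
    Function.comp] at this
  refine this.trans (Nat.mul_le_mul_right _ ?_)
  have h1 : #{x : F | I ⊆ x.1 ∧ x.1 ⊆ U} ≤ 2 ^ d := by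
    have : #{x : F | I ⊆ x.1 ∧ x.1 ⊆ U} ≤ #(Icc I U) := by
      apply Finset.card_le_card_of_injOn (fun x => x.1)
      · intro x hx; simpa using hx
      · intro x _ y _ h; exact Subtype.ext h
    rw [Finset.card_Icc_finset hIU, ← Finset.card_sdiff_of_subset hIU] at this
    exact this.trans (Nat.pow_le_pow_right (by norm_num) hd)
  refine le_trans ?_ (Nat.pow_le_pow_left h1 (t+1))
  rw [← Fintype.card_piFinset_const]
  apply Finset.card_le_card_of_injOn (fun x => x ())
  · intro x hx; simpa [Fintype.mem_piFinset] using hx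
  · intro x _ y _ h; funext u; exact h

open Classical in
lemma frame_count {n : ℕ} (F : Finset (Finset (Fin n))) {p t D : ℕ} (hp : 0 < p)
    (Y : Type) [Fintype Y] (lo hi : Y → Finset (Fin n))
    (hfr : ∀ y, lo y ⊆ hi y → #(hi y \ lo y) ≤ D) :
    (#F) ^ (t+1) * #{z : Y × (Fin p → Fin (t+1) → F) | ∀ σ : Fin p → Fin (t+1),
        frameQ F (lo z.1) (hi z.1) (fun a => z.2 a (σ a))} ≤
      Fintype.card Y * ((p * (2 ^ D * 2 ^ D)) * ((2 ^ (D/p)) ^ (t+1) * ((#F) ^ (t+1)) ^ p)) := by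
  have hsplit : #{z : Y × (Fin p → Fin (t+1) → F) | ∀ σ : Fin p → Fin (t+1),
        frameQ F (lo z.1) (hi z.1) (fun a => z.2 a (σ a))} =
      ∑ y, #{X : Fin p → Fin (t+1) → F | ∀ σ : Fin p → Fin (t+1),
        frameQ F (lo y) (hi y) (fun a => X a (σ a))} := by
    rw [← Finset.card_sigma]
    refine Finset.card_bij' (fun z _ => ⟨z.1, z.2⟩) (fun w _ => (w.1, w.2)) ?_ ?_ ?_ ?_
    · intro z hz; simpa using hz
    · intro z hz; simpa using hz
    · intro z hz; simp
    · intro z hz; simp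
  rw [hsplit, Finset.mul_sum]
  have hy : ∀ y, (#F) ^ (t+1) * #{X : Fin p → Fin (t+1) → F | ∀ σ : Fin p → Fin (t+1),
        frameQ F (lo y) (hi y) (fun a => X a (σ a))} ≤
        (p * (2 ^ D * 2 ^ D)) * ((2 ^ (D/p)) ^ (t+1) * ((#F) ^ (t+1)) ^ p) := by
    intro y
    by_cases hlh : lo y ⊆ hi y
    · let W : Finset (Fin p × Finset (Fin n) × Finset (Fin n)) :=
        (univ ×ˢ (Icc (lo y) (hi y) ×ˢ Icc (lo y) (hi y))).filter
          (fun w => #(w.2.2 \ w.2.1) ≤ D / p ∧ w.2.1 ⊆ w.2.2)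
      have hW : #W ≤ p * (2 ^ D * 2 ^ D) := by
        refine (Finset.card_filter_le _ _).trans ?_
        rw [card_product, card_product, Finset.card_Icc_finset hlh,
          ← Finset.card_sdiff_of_subset hlh, card_univ, Fintype.card_fin]
        have := Nat.pow_le_pow_right (n := 2) (by norm_num) (hfr y hlh)
        gcongr
      have h1 : #{X : Fin p → Fin (t+1) → F | ∀ σ : Fin p → Fin (t+1),
          frameQ F (lo y) (hi y) (fun a => X a (σ a))} ≤
          ∑ w ∈ W, #{X : Fin p → Fin (t+1) → F | ∀ s, w.2.1 ⊆ (X w.1 s).1 ∧ (X w.1 s).1 ⊆ w.2.2} := by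
        refine le_trans (Finset.card_le_card ?_) Finset.card_biUnion_le
        intro X hX
        rw [mem_filter] at hX
        obtain ⟨-, a, I, hI, U, hU, h1, h2, h3⟩ := frame_exists F hp (lo y) (hi y) (hfr y) X hX.2
        rw [mem_biUnion]
        refine ⟨(a, I, U), ?_, ?_⟩
        · simp only [W, mem_filter, mem_product, mem_univ, true_and]
          exact ⟨⟨hI, hU⟩, h1, h2⟩
        · simp only [mem_filter, mem_univ, true_and]
          exact h3
      refine (Nat.mul_le_mul_left _ h1).trans ?_
      rw [Finset.mul_sum]
      calc _ ≤ ∑ w ∈ W, ((2 ^ (D/p)) ^ (t+1) * ((#F) ^ (t+1)) ^ p) := by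
            apply Finset.sum_le_sum
            intro w hw
            simp only [W, mem_filter] at hw
            exact frame_one F w.1 w.2.1 w.2.2 hw.2.2 hw.2.1
        _ = #W * ((2 ^ (D/p)) ^ (t+1) * ((#F) ^ (t+1)) ^ p) := by simp
        _ ≤ _ := Nat.mul_le_mul_right _ hW
    · have : #{X : Fin p → Fin (t+1) → F | ∀ σ : Fin p → Fin (t+1),
        frameQ F (lo y) (hi y) (fun a => X a (σ a))} = 0 := by
        rw [Finset.card_eq_zero, Finset.filter_eq_empty_iff]
        intro X _ hX
        exact hlh (frame_exists F hp (lo y) (hi y) (hfr y) X hX).1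
      rw [this]; simp
  refine (Finset.sum_le_sum fun y _ => hy y).trans ?_
  simp
lemma supersat' (r : ℕ) (δ : ℝ) (hδ : 0 < δ) : ∃ c : ℝ, 0 < c ∧
    ∀ (α : Type) [Fintype α] [Nonempty α] [PartialOrder α],
    (r : ℝ) * nonComp α < (1 - δ) * (Fintype.card α : ℝ) ^ 2 →
    c * (Fintype.card α : ℝ) ^ (r+1) ≤ chains α (r+1) := by
  obtain ⟨q, hq⟩ := exists_nat_gt (2 * r / δ)
  have hq0 : (0:ℝ) < q := lt_of_le_of_lt (by positivity) hq
  refine ⟨δ / 2 / q ^ (r+1), by positivity, ?_⟩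
  intro α _ _ _ h
  have hs := supersat α q r (by exact_mod_cast hq0)
  have hM0 : (0:ℝ) < Fintype.card α := by exact_mod_cast Fintype.card_pos
  set M : ℝ := ((Fintype.card α : ℕ) : ℝ)
  have h1 : (r:ℝ) * (nonComp α / M ^ 2) < 1 - δ := by
    rw [← mul_div_assoc, div_lt_iff₀ (by positivity)]; exact h
  have h2 : (r:ℝ) * (1 / q) ≤ δ / 2 := by
    rw [mul_one_div, div_le_iff₀ hq0]
    rw [div_lt_iff₀ hδ] at hq
    linarith
  have h3 : δ / 2 ≤ (q:ℝ) ^ (r+1) * (chains α (r+1) / M ^ (r+1)) := by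
    rw [mul_add] at hs; linarith
  rw [← mul_div_assoc, le_div_iff₀ (by positivity)] at h3
  rw [div_mul_eq_mul_div, div_le_iff₀ (by positivity)]
  linarith

open Classical in
lemma frame_local (p : ℕ) (hp : 0 < p) (δ : ℝ) (hδ : 0 < δ) (c : ℝ) (hc : 0 < c) :
    ∃ ℓ₁ : ℕ, ∀ ℓ ≥ ℓ₁, ∀ (n : ℕ) (F : Finset (Finset (Fin n))), ℓ ≤ #F →
    ∀ D : ℕ, (D:ℝ) ≤ (1 - δ) * p * Real.logb 2 ℓ →
    ∀ (Y : Type) [Fintype Y] [Nonempty Y] (lo hi : Y → Finset (Fin n)),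
    (∀ y, lo y ⊆ hi y → #(hi y \ lo y) ≤ D) →
    ¬ (c * (Fintype.card Y * (#F : ℝ) ^ p) ≤
      #{z : Y × (Fin p → F) | frameQ F (lo z.1) (hi z.1) z.2}) := by
  obtain ⟨t, ht⟩ := exists_nat_gt ((2 * p + 1) / δ)
  obtain ⟨ℓ₁, hℓ₁⟩ := exists_nat_gt (p / c ^ ((t+1) ^ p))
  refine ⟨max ℓ₁ 1, ?_⟩
  intro ℓ hℓ n F hF D hD Y _ _ lo hi hfr hcon
  have hℓ1 : 1 ≤ ℓ := le_trans (le_max_right _ _) hℓ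
  have hℓ0 : (0:ℝ) < ℓ := by exact_mod_cast hℓ1
  have hℓ2 : (ℓ₁ : ℝ) ≤ ℓ := by exact_mod_cast le_trans (le_max_left _ _) hℓ
  have b1 := blowup (α := F) t p c hc.le Y (fun y x => frameQ F (lo y) (hi y) x)
    (by rw [Fintype.card_coe]; exact hcon)
  have b2 := frame_count F (t := t) hp Y lo hi hfr
  rw [Fintype.card_coe] at b1
  have hM : (ℓ:ℝ) ≤ #F := by exact_mod_cast hF
  have hY : (0:ℝ) < Fintype.card Y := by exact_mod_cast Fintype.card_pos
  set N := #{z : Y × (Fin p → Fin (t+1) → F) | ∀ σ : Fin p → Fin (t+1),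
        frameQ F (lo z.1) (hi z.1) (fun a => z.2 a (σ a))} with hN
  have b3 : (#F:ℝ) ^ (t+1) * N ≤ Fintype.card Y * ((p * (2 ^ D * 2 ^ D)) *
    ((2 ^ (D/p)) ^ (t+1) * ((#F) ^ (t+1)) ^ p)) := by exact_mod_cast b2
  have hM0 : (0:ℝ) < #F := lt_of_lt_of_le hℓ0 hM
  set M : ℝ := (#F : ℝ) with hMdef
  have hK : 0 < Fintype.card Y * (M ^ (t+1)) ^ p := by positivity
  have b4 : c ^ ((t+1)^p) * M ^ (t+1) ≤ p * (2 ^ D * 2 ^ D) * (2 ^ (D/p)) ^ (t+1) := by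
    refine le_of_mul_le_mul_right ?_ hK
    calc c ^ ((t+1)^p) * M ^ (t+1) * (Fintype.card Y * (M ^ (t+1)) ^ p)
        = M ^ (t+1) * (c ^ ((t+1)^p) * (Fintype.card Y * (M ^ (t+1)) ^ p)) := by ring
      _ ≤ M ^ (t+1) * N := by gcongr
      _ ≤ _ := b3
      _ = _ := by ring
  set L := Real.logb 2 ℓ with hL
  have hL0 : 0 ≤ L := Real.logb_nonneg (by norm_num) (by exact_mod_cast hℓ1)
  have hℓL : (2:ℝ) ^ L = ℓ := Real.rpow_logb (by norm_num) (by norm_num) hℓ0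
  have hp0 : (0:ℝ) < p := by exact_mod_cast hp
  have hd : ((D / p : ℕ) : ℝ) ≤ (1 - δ) * L := by
    refine Nat.cast_div_le.trans ?_
    rw [div_le_iff₀ hp0]; linarith
  have hDp : (D:ℝ) ≤ p * L := by nlinarith [mul_nonneg (mul_nonneg hδ.le hp0.le) hL0]
  rw [div_lt_iff₀ hδ] at ht
  have hexp : (D:ℝ) + D + (D / p : ℕ) * (t+1) ≤ L * (t+1) - L := by
    have : ((D / p : ℕ) : ℝ) * (t+1) ≤ (1 - δ) * L * (t+1) := by gcongr
    nlinarith [mul_nonneg hδ.le hL0, mul_le_mul_of_nonneg_right ht.le hL0]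
  have e1 : ((2:ℝ) ^ D * 2 ^ D) * (2 ^ (D/p)) ^ (t+1) = (2:ℝ) ^ ((D:ℝ) + D + (D / p : ℕ) * (t+1)) := by
    rw [Real.rpow_add (by norm_num), Real.rpow_add (by norm_num), Real.rpow_natCast, ← pow_mul]
    congr 1
    rw [← Real.rpow_natCast]; push_cast; rfl
  have e2 : (2:ℝ) ^ (L * (t+1) - L) = (ℓ:ℝ) ^ (t+1) / ℓ := by
    rw [Real.rpow_sub (by norm_num), hℓL]
    congr 1
    rw [← Real.rpow_natCast, ← hℓL, ← Real.rpow_mul (by norm_num)]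
    push_cast; rfl
  have b5 : c ^ ((t+1)^p) * (ℓ:ℝ) ^ (t+1) ≤ p * ((ℓ:ℝ) ^ (t+1) / ℓ) := by
    calc c ^ ((t+1)^p) * (ℓ:ℝ) ^ (t+1) ≤ c ^ ((t+1)^p) * M ^ (t+1) := by gcongr
      _ ≤ _ := b4
      _ = p * (((2:ℝ) ^ D * 2 ^ D) * (2 ^ (D/p)) ^ (t+1)) := by ring
      _ ≤ p * ((ℓ:ℝ) ^ (t+1) / ℓ) := by
        rw [e1, ← e2]
        gcongr
        norm_num
  have b6 : c ^ ((t+1)^p) * ℓ ≤ p := by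
    refine le_of_mul_le_mul_right ?_ (show (0:ℝ) < (ℓ:ℝ) ^ (t+1) by positivity)
    calc c ^ ((t+1)^p) * ℓ * (ℓ:ℝ) ^ (t+1) = (c ^ ((t+1)^p) * (ℓ:ℝ) ^ (t+1)) * ℓ := by ring
      _ ≤ (p * ((ℓ:ℝ) ^ (t+1) / ℓ)) * ℓ := by gcongr
      _ = _ := by field_simp
  rw [div_lt_iff₀ (by positivity)] at hℓ₁
  have : (ℓ₁:ℝ) * c ^ ((t+1)^p) ≤ ℓ * c ^ ((t+1)^p) := by gcongr
  linarith

lemma localA (p : ℕ) (hp : 0 < p) (δ : ℝ) (hδ : 0 < δ) :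
    ∃ ℓ₁ : ℕ, ∀ ℓ ≥ ℓ₁, ∀ (n : ℕ) (F : Finset (Finset (Fin n))), ℓ ≤ #F →
    ∀ a D : ℕ, (∀ A ∈ F, a ≤ #A ∧ #A ≤ a + D) → (D:ℝ) ≤ (1 - δ) * p * Real.logb 2 ℓ →
    (1 - δ) * (#F : ℝ) ^ 2 ≤ (p + 1) * nonComp F := by
  classical
  obtain ⟨c, hc, hsup⟩ := supersat' (p+1) δ hδ
  obtain ⟨ℓ₁, hloc⟩ := frame_local p hp δ hδ c hc
  refine ⟨max ℓ₁ 1, ?_⟩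
  intro ℓ hℓ n F hF a D hsz hD
  by_contra hcon
  push Not at hcon
  have hne : Nonempty F := by
    have : 0 < #F := lt_of_lt_of_le (lt_of_lt_of_le Nat.one_pos (le_trans (le_max_right _ _) hℓ)) hF
    obtain ⟨x, hx⟩ := Finset.card_pos.1 this
    exact ⟨⟨x, hx⟩⟩
  have h1 := hsup F (by rw [Fintype.card_coe]; push_cast; exact hcon)
  rw [Fintype.card_coe] at h1
  refine hloc ℓ (le_trans (le_max_left _ _) hℓ) n F hF D hD (F × F) (fun y => y.1.1) (fun y => y.2.1) ?_ ?_
  · rintro ⟨⟨A, hA⟩, ⟨B, hB⟩⟩ hAB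
    simp only at hAB ⊢
    rw [Finset.card_sdiff_of_subset hAB]
    have := hsz A hA
    have := hsz B hB
    omega
  · rw [Fintype.card_prod, Fintype.card_coe]
    push_cast
    calc c * ((#F:ℝ) * #F * (#F:ℝ) ^ p) = c * (#F:ℝ) ^ (p+1+1) := by ring
      _ ≤ _ := h1
      _ ≤ _ := by
        norm_cast
        unfold chains
        apply Finset.card_le_card_of_injOn
          (fun x => ((x 0, x (Fin.last _)), fun a : Fin p => x a.succ.castSucc))
        · intro x hx
          simp only [coe_filter, mem_univ, true_and, Set.mem_ofPred_eq] at hx ⊢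
          refine ⟨fun i j hij => hx (by simpa using hij), fun a => ⟨?_, ?_⟩⟩
          · exact (hx.monotone (Fin.zero_le _) : x 0 ≤ _)
          · exact (hx.monotone (Fin.le_last _) : _ ≤ x (Fin.last _))
        · intro x _ y _ h
          simp only [Prod.mk.injEq] at h
          obtain ⟨⟨h0, hl⟩, hm⟩ := h
          funext i
          refine Fin.lastCases hl (fun i => ?_) i
          refine Fin.cases h0 (fun i => ?_) i
          exact congrFun hm i

lemma localB (r : ℕ) (δ : ℝ) (hδ : 0 < δ) :
    ∃ ℓ₁ : ℕ, ∀ ℓ ≥ ℓ₁, ∀ (n : ℕ) (F : Finset (Finset (Fin n))), ℓ ≤ #F →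
    (n:ℝ) ≤ (1 - δ) * (r + 1) * Real.logb 2 ℓ →
    (1 - δ) * (#F : ℝ) ^ 2 ≤ r * nonComp F := by
  classical
  obtain ⟨c, hc, hsup⟩ := supersat' r δ hδ
  obtain ⟨ℓ₁, hloc⟩ := frame_local (r+1) (Nat.succ_pos _) δ hδ c hc
  refine ⟨max ℓ₁ 1, ?_⟩
  intro ℓ hℓ n F hF hD
  by_contra hcon
  push Not at hcon
  have hne : Nonempty F := by
    have : 0 < #F := lt_of_lt_of_le (lt_of_lt_of_le Nat.one_pos (le_trans (le_max_right _ _) hℓ)) hF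
    obtain ⟨x, hx⟩ := Finset.card_pos.1 this
    exact ⟨⟨x, hx⟩⟩
  have h1 := hsup F (by rw [Fintype.card_coe]; exact hcon)
  rw [Fintype.card_coe] at h1
  refine hloc ℓ (le_trans (le_max_left _ _) hℓ) n F hF n (by push_cast; exact hD)
    Unit (fun y => ∅) (fun y => univ) ?_ ?_
  · intro _ _; simp
  · rw [Fintype.card_unit]
    push_cast
    rw [one_mul]
    refine h1.trans ?_
    norm_cast
    unfold chains
    apply Finset.card_le_card_of_injOn (fun x => ((), x))
    · intro x hx
      simp only [coe_filter, mem_univ, true_and, Set.mem_ofPred_eq] at hx ⊢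
      exact ⟨hx, fun a => ⟨Finset.empty_subset _, Finset.subset_univ _⟩⟩
    · intro x _ y _ h
      simpa using h
lemma nonComp_eq {n : ℕ} (F : Finset (Finset (Fin n))) :
    nonComp F = #((F ×ˢ F).filter (fun p => ¬ p.1 ⊂ p.2 ∧ ¬ p.2 ⊂ p.1)) := by
  classical
  unfold nonComp
  refine Finset.card_bij (fun z _ => (z.1.1, z.2.1)) ?_ ?_ ?_
  · intro z hz
    simp only [mem_filter, mem_univ, true_and] at hz
    simp only [mem_filter, mem_product]
    exact ⟨⟨z.1.2, z.2.2⟩, hz⟩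
  · rintro ⟨a, b⟩ _ ⟨a', b'⟩ _ h
    simp only [Prod.mk.injEq] at h
    exact Prod.ext (Subtype.ext h.1) (Subtype.ext h.2)
  · rintro ⟨A, B⟩ hz
    simp only [mem_filter, mem_product] at hz
    refine ⟨(⟨A, hz.1.1⟩, ⟨B, hz.1.2⟩), ?_, rfl⟩
    simp only [mem_filter, mem_univ, true_and]
    exact hz.2

lemma incomp_real {n : ℕ} (F : Finset (Finset (Fin n))) :
    (incompCount F : ℝ) = ((nonComp F : ℝ) - #F) / 2 := by
  classical
  have h1 : #F * #F = 2 * compCount F + nonComp F := by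
    have e0 : #(F ×ˢ F) = #F * #F := card_product _ _
    have e1 := Finset.card_filter_add_card_filter_not (s := F ×ˢ F) (fun p => p.1 ⊂ p.2)
    have e2 := Finset.card_filter_add_card_filter_not
      (s := (F ×ˢ F).filter (fun p => ¬ p.1 ⊂ p.2)) (fun p => p.2 ⊂ p.1)
    rw [filter_filter, filter_filter] at e2
    have e3 : #((F ×ˢ F).filter (fun p => ¬ p.1 ⊂ p.2 ∧ p.2 ⊂ p.1)) = compCount F := by
      unfold compCount crossComp
      refine Finset.card_bij (fun z _ => (z.2, z.1)) ?_ ?_ ?_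
      · rintro ⟨A, B⟩ hz
        simp only [mem_filter, mem_product] at hz ⊢
        exact ⟨⟨hz.1.2, hz.1.1⟩, hz.2.2⟩
      · rintro ⟨a, b⟩ _ ⟨a', b'⟩ _ h
        simp only [Prod.mk.injEq] at h
        exact Prod.ext h.2 h.1
      · rintro ⟨A, B⟩ hz
        simp only [mem_filter, mem_product] at hz
        refine ⟨(B, A), ?_, rfl⟩
        simp only [mem_filter, mem_product]
        exact ⟨⟨hz.1.2, hz.1.1⟩, fun h => lt_asymm h hz.2, hz.2⟩
    have e4 : #((F ×ˢ F).filter (fun p => p.1 ⊂ p.2)) = compCount F := rfl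
    rw [nonComp_eq]
    omega
  have h2 : #F ≤ nonComp F := by
    rw [nonComp_eq]
    apply Finset.card_le_card_of_injOn (fun A => (A, A))
    · intro A hA
      simpa using hA
    · intro A _ B _ h
      simpa using h
  have h3 : (#F).choose 2 * 2 = #F * (#F - 1) := by
    rw [Nat.choose_two_right]
    exact Nat.div_mul_cancel (Nat.even_mul_pred_self _).two_dvd
  have h4 : #F * (#F - 1) + #F = #F * #F := by
    rcases Nat.eq_zero_or_pos (#F) with h | h
    · simp [h]
    · obtain ⟨k, hk⟩ : ∃ k, #F = k + 1 := ⟨#F - 1, by omega⟩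
      rw [hk]; simp; ring
  have h5 : 2 * incompCount F + #F = nonComp F := by
    unfold incompCount
    generalize #F * (#F - 1) = x at *
    generalize #F * #F = y at *
    omega
  have h6 : (2:ℝ) * incompCount F + #F = nonComp F := by exact_mod_cast h5
  linarith

lemma nonComp_super {n : ℕ} (F G : Finset (Finset (Fin n))) (h : G ⊆ F) :
    nonComp G + nonComp (F \ G : Finset (Finset (Fin n))) ≤ nonComp F := by
  rw [nonComp_eq, nonComp_eq, nonComp_eq, ← Finset.card_union_of_disjoint]
  · apply Finset.card_le_card
    intro z hz
    simp only [mem_union, mem_filter, mem_product, mem_sdiff] at hz ⊢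
    rcases hz with hz | hz
    · exact ⟨⟨h hz.1.1, h hz.1.2⟩, hz.2⟩
    · exact ⟨⟨hz.1.1.1, hz.1.2.1⟩, hz.2⟩
  · rw [Finset.disjoint_left]
    intro z hz hz'
    simp only [mem_filter, mem_product, mem_sdiff] at hz hz'
    exact hz'.1.1.2 hz.1.1

lemma peel {n : ℕ} (F : Finset (Finset (Fin n))) (M : ℕ) (hM : M ≤ #F) :
    ∃ G ⊆ F, #G = M ∧ ∃ s, (M = 0 ∨ ∃ A ∈ G, #A = s) ∧ (∀ A ∈ G, #A ≤ s) ∧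
      ∀ A ∈ F \ G, s ≤ #A := by
  induction M with
  | zero => exact ⟨∅, by simp, by simp, 0, by simp⟩
  | succ M ih =>
    obtain ⟨G, hGF, hG, s, -, h1, h2⟩ := ih (by omega)
    have hne : (F \ G).Nonempty := by
      rw [← Finset.card_pos, Finset.card_sdiff_of_subset hGF]; omega
    obtain ⟨A, hA, hmin⟩ := Finset.exists_min_image (F \ G) (fun A => #A) hne
    have hA' := mem_sdiff.1 hA
    refine ⟨insert A G, ?_, ?_, #A, ?_, ?_, ?_⟩
    · intro B hB
      rcases mem_insert.1 hB with rfl | hB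
      · exact hA'.1
      · exact hGF hB
    · rw [card_insert_of_notMem hA'.2, hG]
    · exact Or.inr ⟨A, mem_insert_self _ _, rfl⟩
    · intro B hB
      rcases mem_insert.1 hB with rfl | hB
      · exact le_rfl
      · exact (h1 B hB).trans (h2 A hA)
    · intro B hB
      rw [mem_sdiff, mem_insert, not_or] at hB
      exact hmin B (mem_sdiff.2 ⟨hB.1, hB.2.2⟩)

lemma peel_sum {n : ℕ} (α β : ℝ) (hβ : 0 ≤ β) (M : ℕ) (hM : 0 < M)
    (H : ∀ (G : Finset (Finset (Fin n))), #G = M → ∀ a s : ℕ, a ≤ s →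
      (∀ A ∈ G, a ≤ #A ∧ #A ≤ s) → α - β * ((s:ℝ) - a) ≤ nonComp G) (Q : ℕ) :
    ∀ (F : Finset (Finset (Fin n))) (a b : ℕ), a ≤ b → Q * M ≤ #F →
      (∀ A ∈ F, a ≤ #A ∧ #A ≤ b) → Q * α - β * ((b:ℝ) - a) ≤ nonComp F := by
  induction Q with
  | zero =>
    intro F a b hab _ _
    have : (a:ℝ) ≤ b := by exact_mod_cast hab
    have h2 : 0 ≤ β * ((b:ℝ) - a) := mul_nonneg hβ (by linarith)
    have h3 : (0:ℝ) ≤ nonComp F := Nat.cast_nonneg _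
    push_cast
    linarith
  | succ Q ih =>
    intro F a b hab hF hsz
    rw [add_mul, one_mul] at hF
    obtain ⟨G, hGF, hG, s, hs, h1, h2⟩ := peel F M (by omega)
    obtain ⟨A, hA, rfl⟩ := hs.resolve_left hM.ne'
    have hAa := hsz A (hGF hA)
    have e1 := H G hG a (#A) hAa.1 (fun B hB => ⟨(hsz B (hGF hB)).1, h1 B hB⟩)
    have e2 := ih (F \ G) (#A) b hAa.2 (by rw [Finset.card_sdiff_of_subset hGF]; omega)
      (fun B hB => ⟨h2 B hB, (hsz B (mem_sdiff.1 hB).1).2⟩)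
    have e3 : (nonComp G : ℝ) + nonComp (F \ G : Finset (Finset (Fin n))) ≤ nonComp F := by
      exact_mod_cast nonComp_super F G hGF
    push_cast
    nlinarith

lemma caseB (K δ : ℝ) (hδ : 0 < δ) (hδ1 : δ < 1) :
    ∃ ℓ₁ : ℕ, ∀ ℓ ≥ ℓ₁, ∀ (n : ℕ) (F : Finset (Finset (Fin n))), ℓ ≤ #F → 0 < n →
    (n:ℝ) ≤ K * Real.logb 2 ℓ →
    (1 - δ) ^ 2 * (#F : ℝ) ^ 2 * Real.logb 2 ℓ ≤ n * nonComp F := by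
  choose f hf using fun r => localB r δ hδ
  obtain ⟨R, hR⟩ := exists_nat_gt (K / (1 - δ))
  refine ⟨max 2 ((range (R+1)).sup f), ?_⟩
  intro ℓ hℓ n F hF hn hnK
  have hℓ2 : 2 ≤ ℓ := le_trans (le_max_left _ _) hℓ
  have hL : 0 < Real.logb 2 ℓ := Real.logb_pos (by norm_num) (by exact_mod_cast hℓ2)
  set L := Real.logb 2 ℓ
  have h1δ : 0 < 1 - δ := by linarith
  let r := ⌊(n:ℝ) / ((1 - δ) * L)⌋₊
  have hr1 : (r:ℝ) ≤ (n:ℝ) / ((1 - δ) * L) := Nat.floor_le (by positivity)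
  have hr2 : (n:ℝ) / ((1 - δ) * L) < r + 1 := Nat.lt_floor_add_one _
  have hrR : r < R + 1 := by
    have : (r:ℝ) < R := by
      refine lt_of_le_of_lt hr1 (lt_of_le_of_lt ?_ hR)
      rw [div_le_div_iff₀ (by positivity) h1δ]
      nlinarith
    have : r < R := by exact_mod_cast this
    omega
  have hfr : f r ≤ ℓ := le_trans (le_trans (Finset.le_sup (mem_range.2 hrR)) (le_max_right _ _)) hℓ
  rw [div_lt_iff₀ (by positivity)] at hr2
  have h := hf r ℓ hfr n F hF (by linarith)
  rw [le_div_iff₀ (by positivity)] at hr1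
  have hN : (0:ℝ) ≤ nonComp F := Nat.cast_nonneg _
  calc (1 - δ) ^ 2 * (#F : ℝ) ^ 2 * L = ((1 - δ) * (#F : ℝ) ^ 2) * ((1 - δ) * L) := by ring
    _ ≤ (r * nonComp F) * ((1 - δ) * L) := by gcongr
    _ = (r * ((1 - δ) * L)) * nonComp F := by ring
    _ ≤ _ := by gcongr

lemma caseA_local (R δ : ℝ) (hR : 0 < R) (hδ : 0 < δ) (hδ1 : δ < 1) :
    ∃ ℓ₁ : ℕ, ∀ ℓ ≥ ℓ₁, ∀ (n : ℕ) (F : Finset (Finset (Fin n))), ℓ ≤ #F →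
    ∀ a s : ℕ, a ≤ s → (∀ A ∈ F, a ≤ #A ∧ #A ≤ s) →
    (1 - δ) ^ 2 * (#F : ℝ) ^ 2 * ((2 * R + 2) - ((s:ℝ) - a) / Real.logb 2 ℓ) ≤
      (R + 2) ^ 2 * nonComp F := by
  choose f hf using fun r : ℕ => localA (r+1) (Nat.succ_pos r) δ hδ
  obtain ⟨T, hT⟩ := exists_nat_gt ((2 * R + 2) / (1 - δ))
  refine ⟨max 2 ((range (T+1)).sup f), ?_⟩
  intro ℓ hℓ n F hF a s has hsz
  have hℓ2 : 2 ≤ ℓ := le_trans (le_max_left _ _) hℓ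
  have hL : 0 < Real.logb 2 ℓ := Real.logb_pos (by norm_num) (by exact_mod_cast hℓ2)
  set L := Real.logb 2 ℓ
  have h1δ : 0 < 1 - δ := by linarith
  obtain ⟨D, rfl⟩ := Nat.exists_eq_add_of_le has
  have hcast : (((a + D : ℕ) : ℝ) - a) = D := by push_cast; ring
  rw [hcast]
  have hN : (0:ℝ) ≤ nonComp F := Nat.cast_nonneg _
  set x : ℝ := (D:ℝ) / L with hx
  have hx0 : 0 ≤ x := by positivity
  have hDx : (D:ℝ) = x * L := (div_mul_cancel₀ _ hL.ne').symm
  by_cases hbig : 2 * R + 2 ≤ x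
  · have : (1 - δ) ^ 2 * (#F : ℝ) ^ 2 * ((2 * R + 2) - x) ≤ 0 :=
      mul_nonpos_of_nonneg_of_nonpos (mul_nonneg (sq_nonneg _) (sq_nonneg _)) (sub_nonpos.2 hbig)
    have h2 : 0 ≤ (R + 2) ^ 2 * (nonComp F : ℝ) := by positivity
    linarith
  push Not at hbig
  let r := ⌊x / (1 - δ)⌋₊
  have hr1 : (r:ℝ) ≤ x / (1 - δ) := Nat.floor_le (by positivity)
  have hr2 : x / (1 - δ) < r + 1 := Nat.lt_floor_add_one _
  have hrR : r < T + 1 := by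
    have : (r:ℝ) < T := by
      refine lt_of_le_of_lt hr1 (lt_of_le_of_lt ?_ hT)
      gcongr
    have : r < T := by exact_mod_cast this
    omega
  have hfr : f r ≤ ℓ := le_trans (le_trans (Finset.le_sup (mem_range.2 hrR)) (le_max_right _ _)) hℓ
  rw [div_lt_iff₀ h1δ] at hr2
  rw [le_div_iff₀ h1δ] at hr1
  have h := hf r ℓ hfr n F hF a D hsz (by
    rw [hDx]; push_cast
    have := mul_le_mul_of_nonneg_right hr2.le hL.le
    linarith)
  push_cast at h
  have h2 : (1 - δ) ^ 2 * (#F : ℝ) ^ 2 ≤ (x + 2) * nonComp F := by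
    calc (1 - δ) ^ 2 * (#F : ℝ) ^ 2 = (1 - δ) * ((1 - δ) * (#F : ℝ) ^ 2) := by ring
      _ ≤ (1 - δ) * ((r + 1 + 1) * nonComp F) := by gcongr
      _ = (r * (1 - δ) + 2 * (1 - δ)) * nonComp F := by ring
      _ ≤ _ := by gcongr; linarith
  calc (1 - δ) ^ 2 * (#F : ℝ) ^ 2 * ((2 * R + 2) - x)
      ≤ ((x + 2) * nonComp F) * ((2 * R + 2) - x) := by
        apply mul_le_mul_of_nonneg_right h2; linarith
    _ = ((x + 2) * ((2 * R + 2) - x)) * nonComp F := by ring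
    _ ≤ _ := by
      gcongr
      nlinarith [sq_nonneg (x - R)]

set_option maxHeartbeats 1000000 in
lemma caseA (R δ : ℝ) (hR : 1 ≤ R) (hδ : 0 < δ) (hδ1 : δ < 1) :
    ∃ ℓ₁ : ℕ, ∀ ℓ ≥ ℓ₁, ∀ (n : ℕ) (F : Finset (Finset (Fin n))), #F = n * ℓ →
    2 * (R + 1) ^ 2 * Real.logb 2 ℓ ≤ n →
    (1 - δ) ^ 2 * R ^ 2 * (n * (ℓ:ℝ) ^ 2 * Real.logb 2 ℓ) ≤ (R + 2) ^ 2 * nonComp F := by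
  obtain ⟨ℓ₁, hloc⟩ := caseA_local R δ (by linarith) hδ hδ1
  refine ⟨max 4 ℓ₁, ?_⟩
  intro ℓ hℓ n F hF hn
  have hℓ4 : 4 ≤ ℓ := le_trans (le_max_left _ _) hℓ
  have hℓ4' : (4:ℝ) ≤ ℓ := by exact_mod_cast hℓ4
  have hL : 1 ≤ Real.logb 2 ℓ := by
    rw [Real.le_logb_iff_rpow_le (by norm_num) (by linarith), Real.rpow_one]
    linarith
  set L := Real.logb 2 ℓ with hLdef
  set w : ℝ := R * ℓ * L with hw
  have hℓL : 4 ≤ ℓ * L := by nlinarith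
  have hℓw : (ℓ:ℝ) ≤ w := by
    have : (ℓ:ℝ) * 1 ≤ ℓ * (R * L) := by
      apply mul_le_mul_of_nonneg_left _ (by linarith)
      nlinarith
    rw [hw]; linarith
  have hw4 : 4 * R ≤ w := by rw [hw, mul_assoc, mul_comm 4 R]; gcongr
  let M := ⌈w⌉₊
  have hM1 : w ≤ M := Nat.le_ceil _
  have hM2 : (M:ℝ) < w + 1 := Nat.ceil_lt_add_one (by linarith)
  have hℓM : ℓ ≤ M := by
    have : (ℓ:ℝ) ≤ M := hℓw.trans hM1
    exact_mod_cast this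
  have hM0 : 0 < M := by omega
  have hM0' : (0:ℝ) < M := by exact_mod_cast hM0
  let Q := #F / M
  have hQ1 : Q * M ≤ #F := Nat.div_mul_le_self _ _
  have hQ2 : (#F:ℝ) < (Q + 1) * M := by
    have : #F < (Q + 1) * M := by
      have := Nat.lt_mul_div_succ (#F) hM0
      rw [mul_comm]; exact this
    exact_mod_cast this
  have hR2 : 0 < (R + 2) ^ 2 := by positivity
  have h1δ : 0 < 1 - δ := by linarith
  have hp := peel_sum (n := n) ((1 - δ) ^ 2 * (M:ℝ) ^ 2 * (2 * R + 2) / (R + 2) ^ 2)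
    ((1 - δ) ^ 2 * (M:ℝ) ^ 2 / L / (R + 2) ^ 2) (by positivity) M hM0 (by
      intro G hG a s has hsz
      have := hloc ℓ (le_trans (le_max_right _ _) hℓ) n G (by rw [hG]; exact hℓM) a s has hsz
      rw [hG] at this
      rw [div_mul_eq_mul_div, ← sub_div, div_le_iff₀ hR2]
      calc _ = (1 - δ) ^ 2 * (M : ℝ) ^ 2 * ((2 * R + 2) - ((s:ℝ) - a) / L) := by ring
        _ ≤ _ := this
        _ = _ := by ring) Q F 0 n (Nat.zero_le _) hQ1
      (fun A _ => ⟨Nat.zero_le _, by simpa using Finset.card_le_univ A⟩)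
  rw [div_mul_eq_mul_div, ← mul_div_assoc, ← sub_div, div_le_iff₀ hR2] at hp
  have hF' : (#F:ℝ) = n * ℓ := by exact_mod_cast hF
  rw [hF'] at hQ2
  -- main inequality
  have hM3 : (M:ℝ) ^ 2 ≤ (1 + 1 / R) * w ^ 2 := by
    have hR0 : 0 < R := by linarith
    have : (1 + 1 / R) * w ^ 2 = w ^ 2 + w * (w / R) := by field_simp
    have h4 : 4 ≤ w / R := by rw [le_div_iff₀ hR0]; exact hw4
    have h5 : w * 4 ≤ w * (w / R) := by
      apply mul_le_mul_of_nonneg_left h4; linarith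
    rw [this]
    nlinarith
  have hM4 : (M:ℝ) ^ 2 ≤ (R + 1) * R * (ℓ ^ 2 * L ^ 2) := by
    have : (1 + 1 / R) * w ^ 2 = (R + 1) * R * (ℓ ^ 2 * L ^ 2) := by
      rw [hw]; field_simp
    linarith
  have k1 : (M:ℝ) ^ 2 * Q ≥ M * (n * ℓ) - M ^ 2 := by
    have := mul_le_mul_of_nonneg_left hQ2.le hM0'.le
    clear hp
    linarith
  have k2 : (M:ℝ) * (n * ℓ) ≥ R * (n * ℓ ^ 2 * L) := by
    have : w * (n * ℓ) ≤ (M:ℝ) * (n * ℓ) := by gcongr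
    calc R * (n * ℓ ^ 2 * L) = w * (n * ℓ) := by rw [hw]; ring
      _ ≤ _ := this
  have k3 : (M:ℝ) ^ 2 / L * n ≤ (R + 1) * R * (n * ℓ ^ 2 * L) := by
    have : (M:ℝ) ^ 2 / L ≤ (R + 1) * R * (ℓ ^ 2 * L) := by
      rw [div_le_iff₀ (by linarith)]
      linarith
    calc _ ≤ (R + 1) * R * (ℓ ^ 2 * L) * n := by gcongr
      _ = _ := by ring
  have k4 : (2 * R + 2) * (M:ℝ) ^ 2 ≤ R * (n * ℓ ^ 2 * L) := by
    calc (2 * R + 2) * (M:ℝ) ^ 2 ≤ (2 * R + 2) * ((R + 1) * R * (ℓ ^ 2 * L ^ 2)) := by gcongr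
      _ = R * (ℓ ^ 2 * L) * (2 * (R + 1) ^ 2 * L) := by ring
      _ ≤ R * (ℓ ^ 2 * L) * n := by gcongr
      _ = _ := by ring
  have k5 : R ^ 2 * (n * (ℓ:ℝ) ^ 2 * L) ≤
      (2 * R + 2) * ((M:ℝ) ^ 2 * Q) - (M:ℝ) ^ 2 / L * n := by
    have : (2 * R + 2) * ((M:ℝ) ^ 2 * Q) ≥ (2 * R + 2) * (R * (n * ℓ ^ 2 * L) - M ^ 2) := by
      apply mul_le_mul_of_nonneg_left _ (by linarith)
      linarith
    clear hp
    linarith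
  calc (1 - δ) ^ 2 * R ^ 2 * (n * (ℓ:ℝ) ^ 2 * L) = (1 - δ) ^ 2 * (R ^ 2 * (n * (ℓ:ℝ) ^ 2 * L)) := by ring
    _ ≤ (1 - δ) ^ 2 * ((2 * R + 2) * ((M:ℝ) ^ 2 * Q) - (M:ℝ) ^ 2 / L * n) := by gcongr
    _ ≤ nonComp F * (R + 2) ^ 2 := by
      refine le_trans (le_of_eq ?_) hp
      push_cast; ring
    _ = _ := by ring

theorem stmt8 (ε : ℝ) (hε : 0 < ε) :
    ∃ ℓ₀ n₀ : ℕ, ∀ ℓ ≥ ℓ₀, ∀ n ≥ n₀, n * ℓ ≤ 2 ^ n →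
      ∀ ℱ : Finset (Finset (Fin n)), ℱ.card = n * ℓ →
        (1 / 2 - ε) * n * (ℓ : ℝ) ^ 2 * Real.logb 2 ℓ ≤ (incompCount ℱ : ℝ) := by
  by_cases hε1 : 1 / 2 ≤ ε
  · refine ⟨1, 0, ?_⟩
    intro ℓ hℓ n _ _ ℱ _
    have hL : 0 ≤ Real.logb 2 ℓ := Real.logb_nonneg (by norm_num) (by exact_mod_cast hℓ)
    have h1 : 0 ≤ n * (ℓ : ℝ) ^ 2 * Real.logb 2 ℓ := by positivity
    have h2 : (0:ℝ) ≤ incompCount ℱ := Nat.cast_nonneg _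
    nlinarith
  push Not at hε1
  set δ := ε / 3 with hδdef
  have hδ : 0 < δ := by positivity
  have hδ1 : δ < 1 := by rw [hδdef]; linarith
  set R : ℝ := 1 + 2 / δ with hRdef
  have hR1 : 1 ≤ R := by
    have : 0 < 2 / δ := by positivity
    linarith
  have hRδ : (1 - δ) * (R + 2) ≤ R := by
    have : δ * (2 / δ) = 2 := by field_simp
    nlinarith
  obtain ⟨ℓA, hA⟩ := caseA R δ hR1 hδ hδ1
  obtain ⟨ℓB, hB⟩ := caseB (2 * (R + 1) ^ 2) δ hδ hδ1
  obtain ⟨ℓC, hC⟩ := exists_nat_gt (1 / δ)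
  refine ⟨max (max ℓA ℓB) (max ℓC 2), 1, ?_⟩
  intro ℓ hℓ n hn _ ℱ hF
  have hℓA : ℓA ≤ ℓ := le_trans (le_trans (le_max_left _ _) (le_max_left _ _)) hℓ
  have hℓB : ℓB ≤ ℓ := le_trans (le_trans (le_max_right _ _) (le_max_left _ _)) hℓ
  have hℓC : ℓC ≤ ℓ := le_trans (le_trans (le_max_left _ _) (le_max_right _ _)) hℓ
  have hℓ2 : 2 ≤ ℓ := le_trans (le_trans (le_max_right _ _) (le_max_right _ _)) hℓ
  have hℓ2' : (2:ℝ) ≤ ℓ := by exact_mod_cast hℓ2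
  have hn0 : (0:ℝ) < n := by exact_mod_cast hn
  have hL : 1 ≤ Real.logb 2 ℓ := by
    rw [Real.le_logb_iff_rpow_le (by norm_num) (by linarith), Real.rpow_one]
    linarith
  have hF' : (#ℱ:ℝ) = n * ℓ := by exact_mod_cast hF
  have h1δ : 0 < 1 - δ := by linarith
  have hN : (1 - δ) ^ 4 * (n * (ℓ:ℝ) ^ 2 * Real.logb 2 ℓ) ≤ nonComp ℱ := by
    rcases le_total (2 * (R + 1) ^ 2 * Real.logb 2 ℓ) (n:ℝ) with h | h
    · have := hA ℓ hℓA n ℱ hF h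
      refine le_of_mul_le_mul_left ?_ (show 0 < (R + 2) ^ 2 by positivity)
      refine le_trans ?_ this
      have h3 : ((1 - δ) * (R + 2)) ^ 2 ≤ R ^ 2 := by gcongr
      calc (R + 2) ^ 2 * ((1 - δ) ^ 4 * (n * (ℓ:ℝ) ^ 2 * Real.logb 2 ℓ))
          = (1 - δ) ^ 2 * ((1 - δ) * (R + 2)) ^ 2 * (n * (ℓ:ℝ) ^ 2 * Real.logb 2 ℓ) := by ring
        _ ≤ _ := by gcongr
    · have := hB ℓ hℓB n ℱ (by rw [hF]; exact Nat.le_mul_of_pos_left _ hn) hn h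
      refine le_of_mul_le_mul_left ?_ hn0
      refine le_trans ?_ this
      rw [hF']
      have h3 : (1 - δ) ^ 4 ≤ (1 - δ) ^ 2 :=
        pow_le_pow_of_le_one h1δ.le (by linarith) (by norm_num)
      calc (n:ℝ) * ((1 - δ) ^ 4 * (n * (ℓ:ℝ) ^ 2 * Real.logb 2 ℓ))
          = (1 - δ) ^ 4 * (n * ℓ) ^ 2 * Real.logb 2 ℓ := by ring
        _ ≤ _ := by gcongr
  set L := Real.logb 2 ℓ
  rw [incomp_real, hF']
  set Z : ℝ := n * (ℓ:ℝ) ^ 2 * L with hZ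
  have hZ0 : 0 ≤ Z := by positivity
  have hsmall : (n:ℝ) * ℓ ≤ δ * Z := by
    have h1 : 1 ≤ δ * ℓ := by
      rw [div_lt_iff₀ hδ] at hC
      have : (ℓC:ℝ) ≤ ℓ := by exact_mod_cast hℓC
      nlinarith
    have h2 : 1 ≤ δ * ℓ * L := by nlinarith
    calc (n:ℝ) * ℓ = n * ℓ * 1 := by ring
      _ ≤ n * ℓ * (δ * ℓ * L) := by gcongr
      _ = _ := by rw [hZ]; ring
  have hbern : 1 - 4 * δ ≤ (1 - δ) ^ 4 := by
    have := one_add_mul_le_pow (a := -δ) (by linarith) 4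
    have h2 : (1 + -δ) = 1 - δ := by ring
    rw [h2] at this
    push_cast at this
    linarith
  have hfin : (1 - 4 * δ) * Z ≤ nonComp ℱ := (mul_le_mul_of_nonneg_right hbern hZ0).trans hN
  have : (1 / 2 - ε) * n * (ℓ:ℝ) ^ 2 * L = (1 / 2 - ε) * Z := by rw [hZ]; ring
  rw [this]
  have hεδ : ε = 3 * δ := by rw [hδdef]; ring
  rw [hεδ]
  have : 0 ≤ δ * Z := by positivity
  nlinarith
end
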